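/- For every real B > 1, the set 𝓕(B) = { x ∈ (0,1) irrational : a_n(x)·a_{n+1}(x) ≥ B^n for infinitely many n ∈ ℕ, and a_{n+1}(x) < B^n for all sufficiently large n ∈ ℕ } satisfies dim_H 𝓕(B) = t_B, where t_B = inf{ s ≥ 0 : limsup_{n→∞} (1/n)·log Σ_{(a_1,…,a_n) ∈ (ℕ≥1)^n} B^{−n·s²}·q_n(a_1,…,a_n)^{−2s} ≤ 0 } (the limsup taken in the extended reals), i.e. t_B = inf{ s ≥ 0 : P(T, −s·log|T′| − s²·log B) ≤ 0 }. -/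

import Mathlib

open Filter MeasureTheory Set

/-- The Gauss map `T(x) = 1/x - ⌊1/x⌋`. -/
noncomputable def gaussMap (x : ℝ) : ℝ := 1 / x - (⌊1 / x⌋ : ℤ)

/-- The `n`-th partial quotient `a_n(x)` (for `n ≥ 1`) of the continued
fraction expansion of `x`: `a_n(x) = ⌊1 / T^{n-1}(x)⌋`. -/
noncomputable def pq (x : ℝ) (n : ℕ) : ℕ := ⌊1 / (gaussMap^[n - 1] x)⌋₊

/-- The continuant `q_n(a_1, …, a_n)`: `q_0 = 1`, `q_1 = a_1`,
`q_k = a_k q_{k-1} + q_{k-2}`. -/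
def contQ : (n : ℕ) → (Fin n → ℕ) → ℕ
  | 0, _ => 1
  | 1, a => a 0
  | (n + 2), a =>
      a (Fin.last (n + 1)) * contQ (n + 1) (Fin.init a) +
        contQ n (Fin.init (Fin.init a))

/-- `s_B`: the Wang–Wu pressure exponent. -/
noncomputable def sExp (B : ℝ) : ℝ :=
  sInf {s : ℝ | 0 ≤ s ∧
    Filter.atTop.limsup (fun n : ℕ =>
      (((n : ℝ)⁻¹ : ℝ) : EReal) * ENNReal.log (∑' a : Fin n → ℕ+,
        ENNReal.ofReal ((B ^ n * ((contQ n fun i => (a i : ℕ)) : ℝ) ^ 2) ^ (-s)))) ≤ 0}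

/-- `g_{B₁,B₂}`: the two-parameter pressure exponent. -/
noncomputable def gExp (B₁ B₂ : ℝ) : ℝ :=
  sInf {s : ℝ | 0 ≤ s ∧
    Filter.atTop.limsup (fun n : ℕ =>
      (((n : ℝ)⁻¹ : ℝ) : EReal) * ENNReal.log (∑' a : Fin n → ℕ+,
        ENNReal.ofReal (B₂ ^ ((1 - s) * (n : ℝ)) *
          (B₁ ^ n * ((contQ n fun i => (a i : ℕ)) : ℝ) ^ 2) ^ (-s)))) ≤ 0}

/-- `t_B = inf{ s ≥ 0 : P(T, -s log|T'| - s² log B) ≤ 0 }`. -/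
noncomputable def tExp (B : ℝ) : ℝ :=
  sInf {s : ℝ | 0 ≤ s ∧
    Filter.atTop.limsup (fun n : ℕ =>
      (((n : ℝ)⁻¹ : ℝ) : EReal) * ENNReal.log (∑' a : Fin n → ℕ+,
        ENNReal.ofReal (B ^ (-(n : ℝ) * s ^ 2) *
          ((contQ n fun i => (a i : ℕ)) : ℝ) ^ (-(2 * s))))) ≤ 0}

/-!
Split the digits by the exponent `s`: a product `aₙ aₙ₊₁ ≥ Bⁿ` most economically has
`aₙ ≈ B ^ (s n)` and `aₙ₊₁ ≈ B ^ ((1 - s) n)`, and prescribing such a pair multiplies the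
`s`-dimensional size of a cylinder by about `B ^ (-s² n)`. This is where the potential
`-s log |T'| - s² log B` comes from.

Upper bound: below a cylinder of order `n - 1`, the points with `aₙ > B ^ (s n)` fill one interval,
and each smaller value `a` of `aₙ` leaves one interval on which `aₙ₊₁ ≥ Bⁿ / a`. For `s > t_B` the
`s`-th powers of the lengths of all these intervals have a finite sum.

Lower bound: for `s < t_B` the pressure of `-s log |T'|` exceeds `s² log B`, so there is a Gibbs
measure on finitely many words of some length `ℓ` whose cylinders have mass at most
`B ^ (-s² (ℓ + 1))` times the `s`-th power of their length. A random continued fraction alternates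
between a pair of large digits at position `n` and about `n` such words: the pair costs a factor
`B ^ (s² n)`, for which the surplus `B ^ (-s²)` of each word makes up. The law of this continued
fraction has mass at most a multiple of `diam ^ s` on every set, so the mass distribution principle
applies. As `0 < s < 1`, both large digits are of smaller order than `Bⁿ`.
-/

/-- The inverse branch of the Gauss map iterate along a word: `cfEval [a₁, …, aₙ] θ` is
`[a₁, …, aₙ₋₁, aₙ + θ]`, so that `cfEval w '' Icc 0 1` is the cylinder of `w`. -/
noncomputable def cfEval : List ℕ+ → ℝ → ℝ
  | [], θ => θ
  | a :: w, θ => (a + cfEval w θ)⁻¹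

/-- The denominator `qₙ + θ qₙ₋₁` of `cfEval w θ`, in its multiplicative (cocycle) form; at `θ = 0`
it is the continuant of the word. -/
noncomputable def cfDenom : List ℕ+ → ℝ → ℝ
  | [], _ => 1
  | a :: w, θ => (a + cfEval w θ) * cfDenom w θ

section Cylinders

variable {v w : List ℕ+} {a : ℕ+} {θ θ' : ℝ}

lemma one_le_pnatCast (a : ℕ+) : (1 : ℝ) ≤ a := Nat.one_le_cast.2 a.pos

lemma cfEval_nonneg (w : List ℕ+) (hθ : 0 ≤ θ) : 0 ≤ cfEval w θ := by
  induction w with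
  | nil => exact hθ
  | cons a w ih => rw [cfEval]; positivity

lemma cfEval_pos (w : List ℕ+) (hθ : 0 < θ) : 0 < cfEval w θ := by
  induction w with
  | nil => exact hθ
  | cons a w ih => rw [cfEval]; positivity

lemma cfEval_mem_Icc (w : List ℕ+) (hθ : θ ∈ Icc (0 : ℝ) 1) : cfEval w θ ∈ Icc (0 : ℝ) 1 := by
  refine ⟨cfEval_nonneg w hθ.1, ?_⟩
  cases w with
  | nil => exact hθ.2
  | cons a w => exact inv_le_one_of_one_le₀ (by linarith [one_le_pnatCast a, cfEval_nonneg w hθ.1])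

lemma cfEval_mem_Ioo (w : List ℕ+) (hθ : θ ∈ Ioo (0 : ℝ) 1) : cfEval w θ ∈ Ioo (0 : ℝ) 1 := by
  refine ⟨cfEval_pos w hθ.1, ?_⟩
  cases w with
  | nil => exact hθ.2
  | cons a w => exact inv_lt_one_of_one_lt₀ (by linarith [one_le_pnatCast a, cfEval_pos w hθ.1])

lemma cfEval_append (v w : List ℕ+) (θ : ℝ) : cfEval (v ++ w) θ = cfEval v (cfEval w θ) := by
  induction v with
  | nil => rfl
  | cons a v ih => simp only [List.cons_append, cfEval, ih]

lemma cfDenom_append (v w : List ℕ+) (θ : ℝ) :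
    cfDenom (v ++ w) θ = cfDenom v (cfEval w θ) * cfDenom w θ := by
  induction v with
  | nil => simp [cfDenom]
  | cons a v ih => simp only [List.cons_append, cfDenom, cfEval_append, ih, mul_assoc]

lemma one_le_cfDenom (w : List ℕ+) (hθ : 0 ≤ θ) : 1 ≤ cfDenom w θ := by
  induction w with
  | nil => exact le_rfl
  | cons a w ih =>
    exact one_le_mul_of_one_le_of_one_le
      (by linarith [one_le_pnatCast a, cfEval_nonneg w hθ]) ih

lemma cfDenom_pos (w : List ℕ+) (hθ : 0 ≤ θ) : 0 < cfDenom w θ :=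
  one_pos.trans_le (one_le_cfDenom w hθ)

lemma abs_cfEval_sub (w : List ℕ+) (hθ : 0 ≤ θ) (hθ' : 0 ≤ θ') :
    |cfEval w θ - cfEval w θ'| = |θ - θ'| / (cfDenom w θ * cfDenom w θ') := by
  induction w with
  | nil => simp [cfEval, cfDenom]
  | cons a w ih =>
    have h : 0 < a + cfEval w θ := by linarith [one_le_pnatCast a, cfEval_nonneg w hθ]
    have h' : 0 < a + cfEval w θ' := by linarith [one_le_pnatCast a, cfEval_nonneg w hθ']
    rw [cfEval, cfEval, cfDenom, cfDenom, inv_sub_inv h.ne' h'.ne', abs_div, abs_sub_comm,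
      add_sub_add_left_eq_sub, ih, abs_of_pos (mul_pos h h'), div_div]
    congr 1
    ring

lemma cfDenom_append_singleton_eq_mul (w : List ℕ+) (a : ℕ+) (θ : ℝ) :
    cfDenom (w ++ [a]) θ = cfDenom w (a + θ)⁻¹ * (a + θ) := by
  simp [cfDenom_append, cfDenom, cfEval]

lemma cfDenom_eq_lineMap (w : List ℕ+) (hθ : 0 ≤ θ) :
    cfDenom w θ = (1 - θ) * cfDenom w 0 + θ * cfDenom w 1 := by
  induction w using List.reverseRecOn generalizing θ with
  | nil => simp [cfDenom]
  | append_singleton w a ih =>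
    have h {t : ℝ} (ht : 0 ≤ t) :
        cfDenom (w ++ [a]) t = (a + t - 1) * cfDenom w 0 + cfDenom w 1 := by
      have : 0 < a + t := by linarith [one_le_pnatCast a]
      rw [cfDenom_append_singleton_eq_mul, ih (by positivity)]
      field_simp
    rw [h hθ, h le_rfl, h zero_le_one]
    ring

lemma cfDenom_append_singleton (w : List ℕ+) (a : ℕ+) (hθ : 0 ≤ θ) :
    cfDenom (w ++ [a]) θ = (a + θ - 1) * cfDenom w 0 + cfDenom w 1 := by
  have : 0 < a + θ := by linarith [one_le_pnatCast a]
  rw [cfDenom_append_singleton_eq_mul, cfDenom_eq_lineMap w (by positivity)]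
  field_simp

lemma cfDenom_zero_le_one (w : List ℕ+) : cfDenom w 0 ≤ cfDenom w 1 := by
  obtain rfl | ⟨v, a, rfl⟩ := w.eq_nil_or_concat'
  · exact le_rfl
  · rw [cfDenom_append_singleton v a le_rfl, cfDenom_append_singleton v a zero_le_one]
    linarith [cfDenom_pos v le_rfl]

lemma cfDenom_one_le (w : List ℕ+) : cfDenom w 1 ≤ 2 * cfDenom w 0 := by
  obtain rfl | ⟨v, a, rfl⟩ := w.eq_nil_or_concat'
  · norm_num [cfDenom]
  · rw [cfDenom_append_singleton v a le_rfl, cfDenom_append_singleton v a zero_le_one]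
    nlinarith [one_le_pnatCast a, cfDenom_zero_le_one v, cfDenom_pos v le_rfl]

lemma cfDenom_zero_le (w : List ℕ+) (hθ : 0 ≤ θ) : cfDenom w 0 ≤ cfDenom w θ := by
  rw [cfDenom_eq_lineMap w hθ]
  nlinarith [cfDenom_zero_le_one w]

lemma cfDenom_le (w : List ℕ+) (hθ : θ ∈ Icc (0 : ℝ) 1) : cfDenom w θ ≤ 2 * cfDenom w 0 := by
  rw [cfDenom_eq_lineMap w hθ.1]
  nlinarith [cfDenom_zero_le_one w, cfDenom_one_le w, hθ.1, hθ.2]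

lemma cfDenom_append_le (v w : List ℕ+) :
    cfDenom (v ++ w) 0 ≤ 2 * cfDenom v 0 * cfDenom w 0 := by
  rw [cfDenom_append]
  have := (cfDenom_pos w le_rfl).le
  gcongr
  exact cfDenom_le v (cfEval_mem_Icc w (by simp))

lemma abs_cfEval_sub_le (w : List ℕ+) (hθ : 0 ≤ θ) (hθ' : 0 ≤ θ') :
    |cfEval w θ - cfEval w θ'| ≤ |θ - θ'| / cfDenom w 0 ^ 2 := by
  have hD := cfDenom_pos w le_rfl
  have h : cfDenom w 0 ^ 2 ≤ cfDenom w θ * cfDenom w θ' := by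
    rw [sq]
    exact mul_le_mul (cfDenom_zero_le w hθ) (cfDenom_zero_le w hθ') hD.le (cfDenom_pos w hθ).le
  rw [abs_cfEval_sub w hθ hθ']
  gcongr

lemma le_abs_cfEval_sub (w : List ℕ+) (hθ : θ ∈ Icc (0 : ℝ) 1) (hθ' : θ' ∈ Icc (0 : ℝ) 1) :
    |θ - θ'| / (2 * cfDenom w 0) ^ 2 ≤ |cfEval w θ - cfEval w θ'| := by
  have hD := cfDenom_pos w hθ.1
  have hD' := cfDenom_pos w hθ'.1
  have h : cfDenom w θ * cfDenom w θ' ≤ (2 * cfDenom w 0) ^ 2 := by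
    rw [sq]
    exact mul_le_mul (cfDenom_le w hθ) (cfDenom_le w hθ') hD'.le (hD.le.trans (cfDenom_le w hθ))
  rw [abs_cfEval_sub w hθ.1 hθ'.1]
  gcongr

lemma continuousOn_cfEval (w : List ℕ+) : ContinuousOn (cfEval w) (Icc 0 1) := by
  induction w with
  | nil => exact continuousOn_id
  | cons a w ih =>
    refine (continuousOn_const.add ih).inv₀ fun θ hθ => ne_of_gt ?_
    simpa using add_pos_of_pos_of_nonneg (one_pos.trans_le (one_le_pnatCast a))
      (cfEval_nonneg w hθ.1)

lemma two_pow_length_le_cfDenom_sq (w : List ℕ+) : (2 : ℝ) ^ w.length ≤ 2 * cfDenom w 0 ^ 2 := by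
  induction w using List.twoStepInduction with
  | nil => simp [cfDenom]
  | singleton a =>
    simp only [cfDenom, cfEval, List.length_singleton]
    nlinarith [one_le_pnatCast a]
  | cons_cons a b w ih _ =>
    have hD := cfDenom_pos w le_rfl
    have hev := cfEval_nonneg w (le_refl (0 : ℝ))
    have hdouble : 2 * cfDenom w 0 ≤ cfDenom (a :: b :: w) 0 := by
      simp only [cfDenom, cfEval, ← mul_assoc]
      have hb : 0 < b + cfEval w 0 := by linarith [one_le_pnatCast b]
      gcongr
      rw [add_mul, inv_mul_cancel₀ hb.ne']
      nlinarith [one_le_pnatCast a, one_le_pnatCast b]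
    rw [List.length_cons, List.length_cons, pow_succ, pow_succ]
    nlinarith

lemma cfDenom_ofFn_succ {n : ℕ} (a : Fin (n + 1) → ℕ+) (hθ : 0 ≤ θ) :
    cfDenom (List.ofFn a) θ =
      contQ (n + 1) (fun i => (a i : ℕ)) + θ * contQ n (Fin.init fun i => (a i : ℕ)) := by
  induction n generalizing θ with
  | zero => simp [contQ, cfDenom, cfEval]
  | succ n ih =>
    rw [List.ofFn_succ', List.concat_eq_append, cfDenom_append, ih _ (cfEval_nonneg _ hθ)]
    have : 0 < (a (Fin.last (n + 1)) : ℝ) + θ := by linarith [one_le_pnatCast (a (Fin.last _))]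
    simp only [cfDenom, cfEval, contQ, Nat.cast_add, Nat.cast_mul, Fin.init_def]
    field_simp
    ring

lemma contQ_eq_cfDenom {n : ℕ} (a : Fin n → ℕ+) :
    (contQ n fun i => (a i : ℕ) : ℝ) = cfDenom (List.ofFn a) 0 := by
  cases n with
  | zero => simp [contQ, cfDenom]
  | succ n => rw [cfDenom_ofFn_succ a le_rfl, zero_mul, add_zero]

end Cylinders

section PartialQuotients

variable {x y z : ℝ}

lemma gaussMap_inv_add (a : ℕ+) (hy : y ∈ Ioo (0 : ℝ) 1) : gaussMap (a + y)⁻¹ = y := by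
  have : ⌊(a : ℝ) + y⌋ = (a : ℕ) :=
    Int.floor_eq_iff.2 ⟨by simpa using hy.1.le, by simpa using hy.2⟩
  rw [gaussMap, one_div, inv_inv, this]
  simp

lemma pq_one_inv_add (a : ℕ+) (hy : y ∈ Ioo (0 : ℝ) 1) : pq (a + y)⁻¹ 1 = a := by
  simpa [pq] using (Nat.floor_eq_iff (by have := hy.1; positivity)).2
    ⟨le_add_of_nonneg_right hy.1.le, add_lt_add_right hy.2 _⟩

lemma pq_succ_inv_add (a : ℕ+) (hy : y ∈ Ioo (0 : ℝ) 1) (n : ℕ) :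
    pq (a + y)⁻¹ (n + 2) = pq y (n + 1) := by
  simp [pq, Function.iterate_succ_apply, gaussMap_inv_add a hy]

lemma pq_cfEval (w : List ℕ+) (hy : y ∈ Ioo (0 : ℝ) 1) {j : ℕ} (hj : j < w.length) :
    pq (cfEval w y) (j + 1) = w[j] := by
  induction w generalizing j with
  | nil => simp at hj
  | cons a w ih =>
    cases j with
    | zero => exact pq_one_inv_add a (cfEval_mem_Ioo w hy)
    | succ j => exact (pq_succ_inv_add a (cfEval_mem_Ioo w hy) j).trans (ih _)

lemma eq_of_cfEval_eq {v w : List ℕ+} (hvw : v.length = w.length) (hy : y ∈ Ioo (0 : ℝ) 1)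
    (hz : z ∈ Ioo (0 : ℝ) 1) (h : cfEval v y = cfEval w z) : v = w :=
  List.ext_getElem hvw fun j hj hj' => PNat.coe_injective <| by
    rw [← pq_cfEval v hy hj, h, pq_cfEval w hz hj']

lemma length_le_of_cfEval_eq_div (w : List ℕ+) (hy : y ∈ Ioo (0 : ℝ) 1) {p q : ℤ} (hq : 0 < q)
    (h : cfEval w y = p / q) : (w.length : ℤ) ≤ q := by
  induction w generalizing p q with
  | nil => exact hq.le
  | cons a w ih =>
    have hq' : (0 : ℝ) < q := Int.cast_pos.2 hq
    have hmem := h ▸ cfEval_mem_Ioo (a :: w) hy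
    have hp : (0 : ℝ) < p := (div_pos_iff_of_pos_right hq').1 hmem.1
    have hpq : p < q := Int.cast_lt.1 ((div_lt_one hq').1 hmem.2)
    have htail : cfEval w y = (q - a * p : ℤ) / p := by
      have := inv_eq_iff_eq_inv.1 h
      rw [inv_div] at this
      push_cast
      field_simp at this ⊢
      linarith
    have := ih (Int.cast_pos.1 hp) htail
    rw [List.length_cons]
    omega

lemma irrational_of_forall_exists_eq_cfEval (h : ∀ n, ∃ w : List ℕ+, n ≤ w.length ∧
    ∃ y ∈ Ioo (0 : ℝ) 1, x = cfEval w y) : Irrational x := by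
  rintro ⟨r, rfl⟩
  obtain ⟨w, hw, y, hy, hr⟩ := h (r.den + 1)
  have := length_le_of_cfEval_eq_div w hy (p := r.num) (q := r.den)
    (by exact_mod_cast r.den_pos) (by rw [← hr, Rat.cast_def, Int.cast_natCast])
  omega

lemma exists_eq_inv_add (hx : x ∈ Ioo (0 : ℝ) 1) (hirr : Irrational x) :
    ∃ a : ℕ+, ∃ y ∈ Ioo (0 : ℝ) 1, Irrational y ∧ x = (a + y)⁻¹ := by
  have hfloor : 0 < ⌊x⁻¹⌋₊ := Nat.floor_pos.2 (one_lt_inv₀ hx.1 |>.2 hx.2).le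
  have hy : Irrational (x⁻¹ - ⌊x⁻¹⌋₊) := hirr.inv.sub_natCast _
  refine ⟨⟨_, hfloor⟩, _, ⟨lt_of_le_of_ne ?_ hy.ne_zero.symm, ?_⟩, hy, by simp⟩
  · exact sub_nonneg.2 (Nat.floor_le (inv_nonneg.2 hx.1.le))
  · linarith [Nat.lt_floor_add_one x⁻¹]

lemma exists_eq_cfEval_ofFn (n : ℕ) (hx : x ∈ Ioo (0 : ℝ) 1) (hirr : Irrational x) :
    ∃ a : Fin n → ℕ+, ∃ y ∈ Ioo (0 : ℝ) 1, Irrational y ∧ x = cfEval (List.ofFn a) y := by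
  induction n generalizing x with
  | zero => exact ⟨Fin.elim0, x, hx, hirr, by simp [cfEval]⟩
  | succ n ih =>
    obtain ⟨a, y, hy, hy', rfl⟩ := exists_eq_inv_add hx hirr
    obtain ⟨b, z, hz, hz', rfl⟩ := ih hy hy'
    exact ⟨Fin.cons a b, z, hz, hz', by simp [List.ofFn_succ, cfEval]⟩

end PartialQuotients

section Pressure

/-- The partition function `∑ qₙ(a₁, …, aₙ)^(-2s)` over all words of length `n`, whose growth rate
is the pressure of `-s log |T'|`. -/
noncomputable def partitionSum (s : ℝ) (n : ℕ) : ENNReal :=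
  ∑' a : Fin n → ℕ+, ENNReal.ofReal (cfDenom (List.ofFn a) 0 ^ (-(2 * s)))

/-- The pressure `P(T, -s log |T'|)` of the Gauss map. -/
noncomputable def pressure (s : ℝ) : EReal := ExpGrowth.expGrowthSup (partitionSum s)

lemma tsum_ofReal_sub_succ_le {f : ℕ → ℝ} (hf : Antitone f) (hf₀ : ∀ n, 0 ≤ f n) :
    ∑' n, ENNReal.ofReal (f n - f (n + 1)) ≤ ENNReal.ofReal (f 0) := by
  rw [ENNReal.tsum_eq_iSup_nat]
  refine iSup_le fun N => ?_
  rw [← ENNReal.ofReal_sum_of_nonneg fun n _ => sub_nonneg.2 (hf n.le_succ), Finset.sum_range_sub']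
  exact ENNReal.ofReal_le_ofReal (sub_le_self _ (hf₀ N))

lemma tsum_ofFn_succ (f : List ℕ+ → ENNReal) (n : ℕ) :
    ∑' a : Fin (n + 1) → ℕ+, f (List.ofFn a) =
      ∑' (w : Fin n → ℕ+) (a : ℕ+), f (List.ofFn w ++ [a]) := by
  rw [← (Fin.snocEquiv fun _ => ℕ+).tsum_eq, ENNReal.tsum_prod', ENNReal.tsum_comm]
  simp only [Fin.snocEquiv_apply, List.ofFn_succ', List.concat_eq_append, Fin.snoc_castSucc,
    Fin.snoc_last]

lemma tsum_cfDenom_append_singleton_le (w : List ℕ+) :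
    ∑' a : ℕ+, ENNReal.ofReal (cfDenom (w ++ [a]) 0 * cfDenom (w ++ [a]) 1)⁻¹ ≤
      ENNReal.ofReal (cfDenom w 0 * cfDenom w 1)⁻¹ := by
  have h₀ := cfDenom_pos w le_rfl
  have h₁ := cfDenom_pos w zero_le_one
  let f (k : ℕ) : ℝ := (cfDenom w 0 * (k * cfDenom w 0 + cfDenom w 1))⁻¹
  have hf : Antitone f := fun k l hkl => by
    dsimp only [f]
    gcongr
  refine le_of_eq_of_le ?_ ((tsum_ofReal_sub_succ_le hf fun k => by positivity).trans_eq ?_)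
  · rw [← Equiv.pnatEquivNat.symm.tsum_eq]
    refine tsum_congr fun k => congrArg _ ?_
    rw [cfDenom_append_singleton w _ le_rfl, cfDenom_append_singleton w _ zero_le_one]
    simp only [f, Equiv.pnatEquivNat_symm_apply, Nat.succPNat_coe, Nat.succ_eq_add_one,
      Nat.cast_add_one, add_zero, add_sub_cancel_right]
    field_simp
    ring
  · simp [f]

lemma tsum_inv_cfDenom_mul_le (n : ℕ) :
    ∑' a : Fin n → ℕ+,
      ENNReal.ofReal (cfDenom (List.ofFn a) 0 * cfDenom (List.ofFn a) 1)⁻¹ ≤ 1 := by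
  induction n with
  | zero => simp [cfDenom]
  | succ n ih =>
    rw [tsum_ofFn_succ fun w => ENNReal.ofReal (cfDenom w 0 * cfDenom w 1)⁻¹]
    exact (ENNReal.tsum_le_tsum fun w => tsum_cfDenom_append_singleton_le _).trans ih

lemma partitionSum_one_le (n : ℕ) : partitionSum 1 n ≤ 2 := by
  calc partitionSum 1 n
    _ ≤ ∑' a : Fin n → ℕ+,
        2 * ENNReal.ofReal (cfDenom (List.ofFn a) 0 * cfDenom (List.ofFn a) 1)⁻¹ := by
      refine ENNReal.tsum_le_tsum fun a => ?_
      have h₀ := cfDenom_pos (List.ofFn a) le_rfl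
      have h₁ := cfDenom_pos (List.ofFn a) zero_le_one
      rw [← ENNReal.ofReal_ofNat 2, ← ENNReal.ofReal_mul zero_le_two, mul_one,
        Real.rpow_neg h₀.le, Real.rpow_two, sq, ← div_eq_mul_inv]
      refine ENNReal.ofReal_le_ofReal ?_
      rw [inv_eq_one_div, div_le_div_iff₀ (by positivity) (by positivity)]
      nlinarith [cfDenom_one_le (List.ofFn a)]
    _ ≤ 2 := by
      rw [ENNReal.tsum_mul_left]
      exact mul_le_of_le_one_right' (tsum_inv_cfDenom_mul_le n)

lemma pressure_antitone : Antitone pressure := fun s t hst =>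
  ExpGrowth.expGrowthSup_monotone fun n => ENNReal.tsum_le_tsum fun a => by
    gcongr
    exact one_le_cfDenom _ le_rfl

lemma pressure_one_le : pressure 1 ≤ 0 :=
  (ExpGrowth.expGrowthSup_monotone partitionSum_one_le).trans_eq
    (ExpGrowth.expGrowthSup_const two_ne_zero ENNReal.ofNat_ne_top)

variable {B s : ℝ}

lemma expGrowthSup_const_pow_mul {c : ENNReal} (hc₀ : c ≠ 0) (hc : c ≠ ⊤) (u : ℕ → ENNReal) :
    ExpGrowth.expGrowthSup (fun n => c ^ n * u n) = c.log + ExpGrowth.expGrowthSup u := by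
  have hbot : c.log ≠ ⊥ := by simpa
  have htop : c.log ≠ ⊤ := by simpa
  refine le_antisymm ?_ ?_
  · refine (ExpGrowth.expGrowthSup_mul_le (u := fun n => c ^ n) ?_ ?_).trans_eq ?_ <;>
      simp [ExpGrowth.expGrowthSup_pow, *]
  · refine le_trans (le_of_eq ?_) (ExpGrowth.le_expGrowthSup_mul' (u := fun n => c ^ n))
    rw [ExpGrowth.expGrowthInf_pow]

lemma tExp_eq_sInf_pressure (hB : 1 < B) :
    tExp B = sInf {s : ℝ | 0 ≤ s ∧ pressure s ≤ (s ^ 2 * Real.log B : ℝ)} := by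
  refine congrArg sInf (Set.ext fun s => and_congr_right fun _ => ?_)
  have hB₀ : 0 < B := one_pos.trans hB
  have hc : 0 < B ^ (-s ^ 2) := by positivity
  have hsum (n : ℕ) : ∑' a : Fin n → ℕ+, ENNReal.ofReal (B ^ (-(n : ℝ) * s ^ 2) *
      (contQ n fun i => (a i : ℕ) : ℝ) ^ (-(2 * s))) =
      ENNReal.ofReal (B ^ (-s ^ 2)) ^ n * partitionSum s n := by
    rw [partitionSum, ← ENNReal.tsum_mul_left]
    refine tsum_congr fun a => ?_
    rw [contQ_eq_cfDenom, ENNReal.ofReal_mul (by positivity), ← ENNReal.ofReal_pow hc.le,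
      ← Real.rpow_mul_natCast hB₀.le, neg_mul_comm, mul_comm (n : ℝ)]
  have hlimsup : limsup (fun n : ℕ => (((n : ℝ)⁻¹ : ℝ) : EReal) * ENNReal.log (∑' a : Fin n → ℕ+,
      ENNReal.ofReal (B ^ (-(n : ℝ) * s ^ 2) *
        (contQ n fun i => (a i : ℕ) : ℝ) ^ (-(2 * s))))) atTop =
      (-(s ^ 2 * Real.log B) : ℝ) + pressure s := by
    have hlog : (ENNReal.ofReal (B ^ (-s ^ 2))).log = (-(s ^ 2 * Real.log B) : ℝ) := by
      rw [ENNReal.log_ofReal_of_pos hc, Real.log_rpow hB₀, neg_mul]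
    rw [pressure, ← hlog, ← expGrowthSup_const_pow_mul (by simpa) ENNReal.ofReal_ne_top]
    refine limsup_congr (Eventually.of_forall fun n => ?_)
    rw [hsum, EReal.div_eq_inv_mul, ← EReal.coe_coe_eq_natCast, EReal.coe_inv]
  rw [hlimsup, EReal.coe_neg, add_comm, ← sub_eq_add_neg, EReal.sub_nonpos]

lemma one_mem_setOf_pressure_le (hB : 1 < B) :
    (1 : ℝ) ∈ {s : ℝ | 0 ≤ s ∧ pressure s ≤ (s ^ 2 * Real.log B : ℝ)} :=
  ⟨zero_le_one, pressure_one_le.trans <| EReal.coe_nonneg.2 <| by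
    have := Real.log_pos hB
    positivity⟩

lemma pressure_lt_of_tExp_lt (hB : 1 < B) (hs : tExp B < s) :
    pressure s < (s ^ 2 * Real.log B : ℝ) := by
  rw [tExp_eq_sInf_pressure hB] at hs
  obtain ⟨t, ⟨ht, htB⟩, hts⟩ := exists_lt_of_csInf_lt ⟨1, one_mem_setOf_pressure_le hB⟩ hs
  refine (pressure_antitone hts.le).trans_lt (htB.trans_lt (EReal.coe_lt_coe_iff.2 ?_))
  have := Real.log_pos hB
  gcongr

lemma lt_pressure_of_lt_tExp (hB : 1 < B) (hs₀ : 0 ≤ s) (hs : s < tExp B) :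
    (s ^ 2 * Real.log B : ℝ) < pressure s := by
  rw [tExp_eq_sInf_pressure hB] at hs
  by_contra! h
  exact hs.not_ge (csInf_le ⟨0, fun _ h => h.1⟩ ⟨hs₀, h⟩)

lemma tExp_nonneg (B : ℝ) : 0 ≤ tExp B := Real.sInf_nonneg fun _ h => h.1

lemma tExp_le_one (hB : 1 < B) : tExp B ≤ 1 := by
  rw [tExp_eq_sInf_pressure hB]
  exact csInf_le ⟨0, fun _ h => h.1⟩ (one_mem_setOf_pressure_le hB)

lemma ereal_exp_mul_log_mul_natCast (hB : 0 < B) (c : ℝ) (n : ℕ) :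
    EReal.exp ((c * Real.log B : ℝ) * n) = ENNReal.ofReal (B ^ (c * n)) := by
  rw [← EReal.coe_coe_eq_natCast, ← EReal.coe_mul, EReal.exp_coe, Real.rpow_def_of_pos hB]
  ring_nf

lemma exists_eventually_partitionSum_le (hB : 1 < B) (hs : tExp B < s) :
    ∃ c < s ^ 2, ∀ᶠ n : ℕ in atTop, partitionSum s n ≤ ENNReal.ofReal (B ^ (c * n)) := by
  obtain ⟨r, hr, hrs⟩ := EReal.lt_iff_exists_real_btwn.1 (pressure_lt_of_tExp_lt hB hs)
  have hlog := Real.log_pos hB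
  refine ⟨r / Real.log B, (div_lt_iff₀ hlog).2 (EReal.coe_lt_coe_iff.1 hrs), ?_⟩
  filter_upwards [ExpGrowth.eventually_le_exp hr] with n hn
  rwa [← ereal_exp_mul_log_mul_natCast (one_pos.trans hB), div_mul_cancel₀ _ hlog.ne']

lemma exists_frequently_le_partitionSum (hB : 1 < B) (hs₀ : 0 ≤ s) (hs : s < tExp B) :
    ∃ c > s ^ 2, ∃ᶠ n : ℕ in atTop, ENNReal.ofReal (B ^ (c * n)) ≤ partitionSum s n := by
  obtain ⟨r, hsr, hr⟩ := EReal.lt_iff_exists_real_btwn.1 (lt_pressure_of_lt_tExp hB hs₀ hs)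
  have hlog := Real.log_pos hB
  refine ⟨r / Real.log B, (lt_div_iff₀ hlog).2 (EReal.coe_lt_coe_iff.1 hsr), ?_⟩
  refine (ExpGrowth.frequently_exp_le hr).mono fun n hn => ?_
  rwa [← ereal_exp_mul_log_mul_natCast (one_pos.trans hB), div_mul_cancel₀ _ hlog.ne']

end Pressure

section UpperBound

open scoped ENNReal

lemma hausdorffMeasure_limsup_iUnion_eq_zero {X : Type*} [EMetricSpace X] [MeasurableSpace X]
    [BorelSpace X] {ι : ℕ → Type*} [∀ n, Countable (ι n)] {s : ℝ} (hs : 0 < s)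
    {U : ∀ n, ι n → Set X} (hU : ∑' n, ∑' i, Metric.ediam (U n i) ^ s ≠ ∞) :
    μH[s] (limsup (fun n => ⋃ i, U n i) atTop) = 0 := by
  have htail : Tendsto (fun N => ∑' n, ∑' i, Metric.ediam (U (n + N) i) ^ s) atTop (nhds 0) :=
    ENNReal.tendsto_sum_nat_add _ hU
  have hdiam : Tendsto (fun N => (∑' n, ∑' i, Metric.ediam (U (n + N) i) ^ s) ^ s⁻¹) atTop
      (nhds 0) := by
    have := ((ENNReal.continuous_rpow_const (y := s⁻¹)).tendsto 0).comp htail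
    rwa [ENNReal.zero_rpow_of_pos (inv_pos.2 hs)] at this
  refine le_antisymm ((Measure.hausdorffMeasure_le_liminf_tsum s _ _ hdiam
    (fun N (p : Σ n, ι (n + N)) => U (p.1 + N) p.2) ?_ ?_).trans_eq ?_) bot_le
  · refine Eventually.of_forall fun N p => ?_
    rw [ENNReal.le_rpow_inv_iff hs]
    exact (ENNReal.le_tsum (f := fun i => Metric.ediam (U (p.1 + N) i) ^ s) p.2).trans
      (ENNReal.le_tsum (f := fun n => ∑' i, Metric.ediam (U (n + N) i) ^ s) p.1)
  · refine Eventually.of_forall fun N x hx => ?_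
    obtain ⟨n, hn, hx⟩ := (mem_limsup_iff_frequently_mem.1 hx).forall_exists_of_atTop N
    obtain ⟨k, rfl⟩ := Nat.exists_eq_add_of_le' hn
    obtain ⟨i, hi⟩ := mem_iUnion.1 hx
    exact mem_iUnion.2 ⟨⟨k, i⟩, hi⟩
  · simp_rw [ENNReal.tsum_sigma']
    exact htail.liminf_eq

lemma dimH_limsup_iUnion_le {X : Type*} [EMetricSpace X] {ι : ℕ → Type*} [∀ n, Countable (ι n)]
    {s : ℝ} (hs : 0 < s) {U : ∀ n, ι n → Set X}
    (hU : ∑' n, ∑' i, Metric.ediam (U n i) ^ s ≠ ∞) :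
    dimH (limsup (fun n => ⋃ i, U n i) atTop) ≤ ENNReal.ofReal s := by
  borelize X
  refine dimH_le_of_hausdorffMeasure_ne_top (d := s.toNNReal) ?_
  rw [Real.coe_toNNReal s hs.le, hausdorffMeasure_limsup_iUnion_eq_zero hs hU]
  exact ENNReal.zero_ne_top

variable {B s Y r : ℝ}

lemma ediam_cfEval_image_Icc_le (w : List ℕ+) :
    Metric.ediam (cfEval w '' Icc 0 r) ≤ ENNReal.ofReal (r / cfDenom w 0 ^ 2) := by
  refine Metric.ediam_le ?_
  rintro _ ⟨θ, hθ, rfl⟩ _ ⟨θ', hθ', rfl⟩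
  rw [edist_dist, Real.dist_eq]
  refine ENNReal.ofReal_le_ofReal ((abs_cfEval_sub_le w hθ.1 hθ'.1).trans ?_)
  gcongr
  rw [abs_le]
  constructor <;> linarith [hθ.1, hθ.2, hθ'.1, hθ'.2]

lemma sum_range_succ_rpow_neg_le (hs₀ : 0 ≤ s) (hs₁ : s < 1) (n : ℕ) :
    ∑ k ∈ Finset.range n, ((k : ℝ) + 1) ^ (-s) ≤ (n : ℝ) ^ (1 - s) / (1 - s) := by
  have hs : 0 < 1 - s := sub_pos.2 hs₁
  induction n with
  | zero => simp [Real.zero_rpow hs.ne']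
  | succ n ih =>
    have hn : (0 : ℝ) < n + 1 := by positivity
    have hinv : (n + 1 : ℝ)⁻¹ ≤ 1 := inv_le_one_of_one_le₀ (by linarith [n.cast_nonneg (α := ℝ)])
    have bernoulli : (1 + -(n + 1 : ℝ)⁻¹) ^ (1 - s) ≤ 1 + (1 - s) * -(n + 1 : ℝ)⁻¹ :=
      rpow_one_add_le_one_add_mul_self (neg_le_neg hinv) hs.le (by linarith)
    have hsplit : (n : ℝ) ^ (1 - s) = (n + 1 : ℝ) ^ (1 - s) * (1 + -(n + 1 : ℝ)⁻¹) ^ (1 - s) := by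
      rw [← Real.mul_rpow hn.le (by linarith)]
      congr 1
      field_simp
      ring
    have hpow : (n + 1 : ℝ) ^ (1 - s) = (n + 1) * (n + 1 : ℝ) ^ (-s) := by
      rw [sub_eq_add_neg, Real.rpow_add hn, Real.rpow_one]
    rw [Finset.sum_range_succ, Nat.cast_add_one, ← le_sub_iff_add_le]
    refine ih.trans ?_
    rw [le_sub_iff_add_le, div_add' _ _ _ hs.ne']
    gcongr
    calc (n : ℝ) ^ (1 - s) + (n + 1 : ℝ) ^ (-s) * (1 - s)
      _ ≤ (n + 1 : ℝ) ^ (1 - s) * (1 + (1 - s) * -(n + 1 : ℝ)⁻¹)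
          + (n + 1 : ℝ) ^ (-s) * (1 - s) := by
        rw [hsplit]
        gcongr
      _ = (n + 1 : ℝ) ^ (1 - s) := by
        rw [hpow]
        field_simp
        ring

/-- The sets covering the points of the cylinder of `w` whose next two partial quotients `a`, `b`
satisfy `Y ≤ a b`: one neighbourhood of the endpoint `cfEval w 0` takes care of all `a > Y ^ s`,
and each smaller `a` gets the interval that `b ≥ Y / a` confines the point to. -/
def largeProductCover (s Y : ℝ) (w : List ℕ+) : Option (Fin ⌊Y ^ s⌋₊) → Set ℝ
  | none => cfEval w '' Icc 0 (Y ^ s)⁻¹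
  | some k => cfEval (w ++ [(k : ℕ).succPNat]) '' Icc 0 ((k + 1) / Y)

lemma exists_mem_largeProductCover (hY : 0 < Y) (w : List ℕ+) {a b : ℕ+} (hab : Y ≤ a * b) {z : ℝ}
    (hz : 0 ≤ z) : ∃ i, cfEval (w ++ [a, b]) z ∈ largeProductCover s Y w i := by
  obtain ha | ha := le_or_gt (a : ℝ) (Y ^ s)
  · have hk : a.natPred < ⌊Y ^ s⌋₊ :=
      Nat.lt_of_lt_of_le (Nat.sub_lt a.pos one_pos) (Nat.le_floor ha)
    refine ⟨some ⟨a.natPred, hk⟩, cfEval [b] z, ⟨cfEval_nonneg _ hz, ?_⟩, ?_⟩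
    · have : (a.natPred : ℝ) + 1 = a := by exact_mod_cast a.natPred_add_one
      rw [this, cfEval, cfEval, inv_le_comm₀ (by positivity) (by positivity), inv_div,
        div_le_iff₀ (by positivity)]
      nlinarith [one_le_pnatCast a]
    · rw [PNat.succPNat_natPred, ← cfEval_append, List.append_assoc, List.singleton_append]
  · refine ⟨none, cfEval [a, b] z, ⟨cfEval_nonneg _ hz, ?_⟩, (cfEval_append _ _ _).symm⟩
    exact inv_anti₀ (by positivity) (ha.le.trans (le_add_of_nonneg_right (cfEval_nonneg [b] hz)))

lemma ediam_largeProductCover_none_rpow_le (hs : 0 ≤ s) (hY : 0 < Y) (w : List ℕ+) :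
    Metric.ediam (largeProductCover s Y w none) ^ s ≤
      ENNReal.ofReal (Y ^ (-s ^ 2) * cfDenom w 0 ^ (-(2 * s))) := by
  have hD := cfDenom_pos w le_rfl
  refine (ENNReal.rpow_le_rpow (ediam_cfEval_image_Icc_le w) hs).trans_eq ?_
  rw [ENNReal.ofReal_rpow_of_nonneg (by positivity) hs,
    Real.div_rpow (by positivity) (by positivity), ← Real.rpow_neg hY.le, ← Real.rpow_mul hY.le,
    ← Real.rpow_natCast_mul hD.le, Real.rpow_neg hD.le, div_eq_mul_inv, neg_mul, sq, Nat.cast_two]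

lemma ediam_largeProductCover_some_rpow_le (hs : 0 ≤ s) (hY : 0 < Y) (w : List ℕ+)
    (k : Fin ⌊Y ^ s⌋₊) :
    Metric.ediam (largeProductCover s Y w (some k)) ^ s ≤
      ENNReal.ofReal (((k : ℝ) + 1) ^ (-s) * (Y ^ (-s) * cfDenom w 0 ^ (-(2 * s)))) := by
  have hD := cfDenom_pos w le_rfl
  have hle : ((k : ℝ) + 1) * cfDenom w 0 ≤ cfDenom (w ++ [(k : ℕ).succPNat]) 0 := by
    rw [cfDenom_append_singleton _ _ le_rfl, Nat.succPNat_coe, Nat.cast_succ]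
    linarith [cfDenom_zero_le_one w]
  refine (ENNReal.rpow_le_rpow (ediam_cfEval_image_Icc_le _) hs).trans ?_
  rw [ENNReal.ofReal_rpow_of_nonneg (by positivity) hs]
  refine ENNReal.ofReal_le_ofReal ?_
  calc (((k : ℝ) + 1) / Y / cfDenom (w ++ [(k : ℕ).succPNat]) 0 ^ 2) ^ s
    _ ≤ (((k : ℝ) + 1) / Y / (((k : ℝ) + 1) * cfDenom w 0) ^ 2) ^ s := by gcongr
    _ = (((k : ℝ) + 1)⁻¹ * (Y⁻¹ * (cfDenom w 0 ^ 2)⁻¹)) ^ s := by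
      congr 1
      field_simp
    _ = ((k : ℝ) + 1) ^ (-s) * (Y ^ (-s) * cfDenom w 0 ^ (-(2 * s))) := by
      rw [Real.mul_rpow (by positivity) (by positivity),
        Real.mul_rpow (by positivity) (by positivity), ← Real.rpow_neg_eq_inv_rpow,
        ← Real.rpow_neg_eq_inv_rpow, ← Real.rpow_neg_eq_inv_rpow, ← Real.rpow_natCast_mul hD.le,
        Nat.cast_two, mul_neg]

lemma tsum_ediam_largeProductCover_le (hs₀ : 0 ≤ s) (hs₁ : s < 1) (hY : 0 < Y) (w : List ℕ+) :
    ∑' i, Metric.ediam (largeProductCover s Y w i) ^ s ≤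
      ENNReal.ofReal ((1 + 1 / (1 - s)) * Y ^ (-s ^ 2)) *
        ENNReal.ofReal (cfDenom w 0 ^ (-(2 * s))) := by
  have hD := cfDenom_pos w le_rfl
  have hsum : ∑ k : Fin ⌊Y ^ s⌋₊, ((k : ℝ) + 1) ^ (-s) ≤ Y ^ (s * (1 - s)) / (1 - s) := by
    rw [Fin.sum_univ_eq_sum_range fun k : ℕ => ((k : ℝ) + 1) ^ (-s), Real.rpow_mul hY.le]
    refine (sum_range_succ_rpow_neg_le hs₀ hs₁ _).trans ?_
    gcongr
    exact Nat.floor_le (by positivity)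
  rw [tsum_fintype, Fintype.sum_option]
  calc _ ≤ ENNReal.ofReal (Y ^ (-s ^ 2) * cfDenom w 0 ^ (-(2 * s))) +
        ∑ k : Fin ⌊Y ^ s⌋₊, ENNReal.ofReal (((k : ℝ) + 1) ^ (-s) *
          (Y ^ (-s) * cfDenom w 0 ^ (-(2 * s)))) :=
      add_le_add (ediam_largeProductCover_none_rpow_le hs₀ hY w)
        (Finset.sum_le_sum fun k _ => ediam_largeProductCover_some_rpow_le hs₀ hY w k)
    _ = ENNReal.ofReal (Y ^ (-s ^ 2) * cfDenom w 0 ^ (-(2 * s)) +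
        (∑ k : Fin ⌊Y ^ s⌋₊, ((k : ℝ) + 1) ^ (-s)) * (Y ^ (-s) * cfDenom w 0 ^ (-(2 * s)))) := by
      rw [← ENNReal.ofReal_sum_of_nonneg fun _ _ => by positivity, Finset.sum_mul,
        ENNReal.ofReal_add (by positivity) (by positivity)]
    _ ≤ ENNReal.ofReal (Y ^ (-s ^ 2) * cfDenom w 0 ^ (-(2 * s)) +
        Y ^ (s * (1 - s)) / (1 - s) * (Y ^ (-s) * cfDenom w 0 ^ (-(2 * s)))) := by gcongr
    _ = _ := by
      have hexp : Y ^ (-s ^ 2) = Y ^ (s * (1 - s)) * Y ^ (-s) := by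
        rw [← Real.rpow_add hY]
        ring_nf
      rw [← ENNReal.ofReal_mul (by positivity), hexp]
      ring_nf

lemma tsum_ediam_largeProductCover_ofFn_le (hs₀ : 0 ≤ s) (hs₁ : s < 1) (hY : 0 < Y) (n : ℕ) :
    ∑' p : (Fin n → ℕ+) × Option (Fin ⌊Y ^ s⌋₊),
        Metric.ediam (largeProductCover s Y (List.ofFn p.1) p.2) ^ s ≤
      ENNReal.ofReal ((1 + 1 / (1 - s)) * Y ^ (-s ^ 2)) * partitionSum s n := by
  rw [ENNReal.tsum_prod', partitionSum, ← ENNReal.tsum_mul_left]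
  refine ENNReal.tsum_le_tsum fun a => ?_
  exact tsum_ediam_largeProductCover_le hs₀ hs₁ hY (List.ofFn a)

/-- The set of `x` with `aₙ(x) aₙ₊₁(x) ≥ Bⁿ` for infinitely many `n`. -/
def largeProductSet (B : ℝ) : Set ℝ :=
  {x | x ∈ Ioo (0 : ℝ) 1 ∧ Irrational x ∧ {n | B ^ n ≤ (pq x n : ℝ) * pq x (n + 1)}.Infinite}

lemma largeProductSet_subset_limsup (hB : 0 < B) (s : ℝ) (N : ℕ) :
    largeProductSet B ⊆ limsup (fun n =>
      ⋃ p : (Fin (n + N) → ℕ+) × Option (Fin ⌊(B ^ (n + N + 1)) ^ s⌋₊),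
        largeProductCover s (B ^ (n + N + 1)) (List.ofFn p.1) p.2) atTop := by
  rintro x ⟨hx, hirr, hinf⟩
  refine mem_limsup_iff_frequently_mem.2 (frequently_atTop.2 fun M => ?_)
  obtain ⟨n, hn, hMn⟩ := hinf.exists_gt (M + N)
  obtain ⟨m, rfl⟩ : ∃ m, n = m + N + 1 := ⟨n - N - 1, by omega⟩
  refine ⟨m, by omega, mem_iUnion.2 ?_⟩
  obtain ⟨a, y, hy, hyirr, rfl⟩ := exists_eq_cfEval_ofFn (m + N) hx hirr
  obtain ⟨b, y', hy', hyirr', rfl⟩ := exists_eq_inv_add hy hyirr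
  obtain ⟨c, z, hz, -, rfl⟩ := exists_eq_inv_add hy' hyirr'
  have hword : cfEval (List.ofFn a) (b + (c + z)⁻¹)⁻¹ = cfEval (List.ofFn a ++ [b, c]) z :=
    (cfEval_append _ [b, c] z).symm
  rw [hword] at hn ⊢
  have hbc : B ^ (m + N + 1) ≤ (b : ℝ) * c := by
    simpa [pq_cfEval (List.ofFn a ++ [b, c]) hz] using hn
  obtain ⟨i, hi⟩ := exists_mem_largeProductCover (s := s) (by positivity) (List.ofFn a) hbc hz.1.le
  exact ⟨(a, i), hi⟩

lemma dimH_largeProductSet_le_of_tExp_lt (hB : 1 < B) (hs : tExp B < s) (hs₁ : s < 1) :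
    dimH (largeProductSet B) ≤ ENNReal.ofReal s := by
  have hB₀ : 0 < B := one_pos.trans hB
  have hs₀ : 0 < s := (tExp_nonneg B).trans_lt hs
  obtain ⟨c, hc, hev⟩ := exists_eventually_partitionSum_le hB hs
  obtain ⟨N, hN⟩ := eventually_atTop.1 hev
  refine (dimH_mono (largeProductSet_subset_limsup hB₀ s N)).trans (dimH_limsup_iUnion_le hs₀ ?_)
  have hq : B ^ (c - s ^ 2) < 1 := Real.rpow_lt_one_of_one_lt_of_neg hB (sub_neg.2 hc)
  have hle (n : ℕ) : ∑' p : (Fin (n + N) → ℕ+) × Option (Fin ⌊(B ^ (n + N + 1)) ^ s⌋₊),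
      Metric.ediam (largeProductCover s (B ^ (n + N + 1)) (List.ofFn p.1) p.2) ^ s ≤
        ENNReal.ofReal ((1 + 1 / (1 - s)) * B ^ (-s ^ 2) * (B ^ (c - s ^ 2)) ^ (n + N)) := by
    refine (tsum_ediam_largeProductCover_ofFn_le hs₀.le hs₁ (by positivity) _).trans ?_
    refine (mul_le_mul_right (hN _ (Nat.le_add_left N n)) _).trans_eq ?_
    rw [← ENNReal.ofReal_mul (by positivity), mul_assoc, mul_assoc, ← Real.rpow_natCast B,
      ← Real.rpow_mul hB₀.le, ← Real.rpow_add hB₀, ← Real.rpow_mul_natCast hB₀.le,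
      ← Real.rpow_add hB₀]
    push_cast
    ring_nf
  refine ne_top_of_le_ne_top ?_ (ENNReal.tsum_le_tsum hle)
  refine Summable.tsum_ofReal_ne_top (Summable.mul_left _ ?_)
  exact (summable_nat_add_iff N).2 (summable_geometric_of_lt_one (by positivity) hq)

lemma dimH_largeProductSet_le (hB : 1 < B) :
    dimH (largeProductSet B) ≤ ENNReal.ofReal (tExp B) := by
  refine le_of_forall_gt_imp_ge_of_dense fun d hd => ?_
  obtain hd₁ | hd₁ := le_or_gt 1 d
  · exact (dimH_mono (subset_univ _)).trans (Real.dimH_univ.trans_le hd₁)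
  · lift d to NNReal using hd₁.ne_top
    have := dimH_largeProductSet_le_of_tExp_lt hB (s := d)
      (by simpa [ENNReal.ofReal_lt_iff_lt_toReal (tExp_nonneg B)] using hd) (by simpa using hd₁)
    simpa using this

end UpperBound

section Coding

/-- The concatenation of the first `n` blocks of a sequence of words. -/
def prefixWord (ω : ℕ → List ℕ+) : ℕ → List ℕ+
  | 0 => []
  | n + 1 => prefixWord ω n ++ ω n

/-- The point `x` lies in the cylinders of all the words `prefixWord ω n`, that is, `ω` is a block
decomposition of the continued fraction of `x`. -/
def IsCoded (ω : ℕ → List ℕ+) (x : ℝ) : Prop :=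
  ∀ n, x ∈ cfEval (prefixWord ω n) '' Icc 0 1

variable {ω ω' : ℕ → List ℕ+} {x : ℝ}

lemma le_length_prefixWord (hω : ∀ n, ω n ≠ []) (n : ℕ) : n ≤ (prefixWord ω n).length := by
  induction n with
  | zero => exact bot_le
  | succ n ih =>
    rw [prefixWord, List.length_append]
    exact Nat.add_le_add ih (List.length_pos_of_ne_nil (hω n))

lemma prefixWord_congr {n : ℕ} (h : ∀ j < n, ω j = ω' j) : prefixWord ω n = prefixWord ω' n := by
  induction n with
  | zero => rfl
  | succ n ih => rw [prefixWord, prefixWord, ih fun j hj => h j (hj.trans n.lt_succ_self),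
      h n n.lt_succ_self]

lemma exists_isCoded (ω : ℕ → List ℕ+) : ∃ x, IsCoded ω x := by
  have hcompact (n : ℕ) : IsCompact (cfEval (prefixWord ω n) '' Icc 0 1) :=
    isCompact_Icc.image_of_continuousOn (continuousOn_cfEval _)
  obtain ⟨x, hx⟩ := IsCompact.nonempty_iInter_of_sequence_nonempty_isCompact_isClosed
    (fun n => cfEval (prefixWord ω n) '' Icc 0 1)
    (by
      rintro n _ ⟨θ, hθ, rfl⟩
      exact ⟨cfEval (ω n) θ, cfEval_mem_Icc _ hθ, (cfEval_append _ _ _).symm⟩)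
    (fun n => (nonempty_Icc.2 zero_le_one).image _) (hcompact 0) fun n => (hcompact n).isClosed
  exact ⟨x, mem_iInter.1 hx⟩

lemma inv_sq_cfDenom_prefixWord_le (hω : ∀ n, ω n ≠ []) (n : ℕ) :
    (cfDenom (prefixWord ω n) 0 ^ 2)⁻¹ ≤ 2 * (1 / 2) ^ n := by
  have hD := cfDenom_pos (prefixWord ω n) le_rfl
  have hpow : (2 : ℝ) ^ n ≤ 2 * cfDenom (prefixWord ω n) 0 ^ 2 :=
    (pow_le_pow_right₀ one_le_two (le_length_prefixWord hω n)).trans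
      (two_pow_length_le_cfDenom_sq _)
  rw [one_div_pow, mul_one_div, inv_le_comm₀ (by positivity) (by positivity), inv_div]
  linarith

lemma tendsto_two_mul_half_pow : Tendsto (fun n : ℕ => 2 * (1 / 2 : ℝ) ^ n) atTop (nhds 0) := by
  simpa using (tendsto_pow_atTop_nhds_zero_of_lt_one (r := (1 / 2 : ℝ)) (by norm_num)
    (by norm_num)).const_mul 2

lemma IsCoded.tendsto (hx : IsCoded ω x) (hω : ∀ n, ω n ≠ []) :
    Tendsto (fun n => cfEval (prefixWord ω n) 0) atTop (nhds x) := by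
  refine tendsto_iff_dist_tendsto_zero.2
    (squeeze_zero (fun _ => dist_nonneg) (fun n => ?_) tendsto_two_mul_half_pow)
  obtain ⟨θ, hθ, rfl⟩ := hx n
  refine (abs_cfEval_sub_le _ le_rfl hθ.1).trans (le_trans ?_ (inv_sq_cfDenom_prefixWord_le hω n))
  rw [zero_sub, abs_neg, abs_of_nonneg hθ.1, div_eq_mul_inv]
  exact mul_le_of_le_one_left (by positivity) hθ.2

end Coding

section MassDistribution

open scoped ENNReal

lemma ofReal_le_dimH_of_measure_le {X : Type*} [EMetricSpace X] [MeasurableSpace X] [BorelSpace X]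
    {μ : Measure X} {s : ℝ} {K : ℝ≥0∞} (hK : K ≠ ∞)
    (hμ : ∀ E, IsClosed E → μ E ≤ K * Metric.ediam E ^ s) {F : Set X} (hF : μ F ≠ 0) :
    ENNReal.ofReal s ≤ dimH F := by
  obtain hs | hs := le_total s 0
  · simp [ENNReal.ofReal_of_nonpos hs]
  have hle : (K + 1)⁻¹ • μ ≤ μH[s] := by
    refine Measure.le_hausdorffMeasure s _ 1 one_pos fun E _ => ?_
    rw [Measure.smul_apply, smul_eq_mul, ENNReal.inv_mul_le_iff (by simp) (by simpa using hK)]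
    calc μ E ≤ μ (closure E) := measure_mono subset_closure
      _ ≤ K * Metric.ediam (closure E) ^ s := hμ _ isClosed_closure
      _ ≤ (K + 1) * Metric.ediam E ^ s := by
        rw [Metric.ediam_closure]
        gcongr
        exact le_self_add
  have hne : μH[(s.toNNReal : ℝ)] F ≠ 0 := by
    rw [Real.coe_toNNReal s hs]
    refine fun h₀ => hF ?_
    simpa [h₀, hK] using hle F
  exact le_dimH_of_hausdorffMeasure_ne_zero hne

lemma infinitePi_cylinder_inter {X : ℕ → Type*} [∀ i, MeasurableSpace (X i)]
    [∀ i, MeasurableSingletonClass (X i)] (μ : ∀ i, Measure (X i)) [∀ i, IsProbabilityMeasure (μ i)]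
    (ω : ∀ i, X i) (n : ℕ) {R : Set (X n)} (hR : MeasurableSet R) :
    Measure.infinitePi μ (PiNat.cylinder ω n ∩ (fun ω' => ω' n) ⁻¹' R) =
      (∏ j ∈ Finset.range n, μ j {ω j}) * μ n R := by
  have heq : PiNat.cylinder ω n ∩ (fun ω' => ω' n) ⁻¹' R =
      Set.pi (Finset.range (n + 1)) (Function.update (fun j => {ω j}) n R) := by
    ext ω'
    simp only [PiNat.cylinder, mem_inter_iff, mem_ofPred_eq, mem_preimage, Set.mem_pi,
      Finset.coe_range, mem_Iio, Nat.lt_succ_iff_lt_or_eq, or_imp, forall_and, forall_eq,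
      Function.update_self]
    refine and_congr_left' (forall₂_congr fun j hj => ?_)
    rw [Function.update_of_ne hj.ne, mem_singleton_iff]
  rw [heq, Measure.infinitePi_pi, Finset.prod_range_succ, Function.update_self]
  · refine congrArg (· * _) (Finset.prod_congr rfl fun j hj => ?_)
    rw [Function.update_of_ne (Finset.mem_range.1 hj).ne]
  · intro j _
    obtain rfl | hj := eq_or_ne j n
    · rwa [Function.update_self]
    · rw [Function.update_of_ne hj]
      exact measurableSet_singleton _

lemma exists_subset_cylinder_of_nontrivial {X : ℕ → Type*} {A : Set (∀ i, X i)}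
    (hA : A.Nontrivial) :
    ∃ n, (∀ ω ∈ A, A ⊆ PiNat.cylinder ω n) ∧ ((fun ω => ω n) '' A).Nontrivial := by
  classical
  have hdiff : ∃ n, ∃ ω ∈ A, ∃ ω' ∈ A, ω n ≠ ω' n := by
    obtain ⟨ω, hω, ω', hω', hne⟩ := hA
    obtain ⟨n, hn⟩ := Function.ne_iff.1 hne
    exact ⟨n, ω, hω, ω', hω', hn⟩
  refine ⟨Nat.find hdiff, fun ω hω ω' hω' j hj => ?_, ?_⟩
  · by_contra hne
    exact Nat.find_min hdiff hj ⟨ω', hω', ω, hω, hne⟩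
  · obtain ⟨ω, hω, ω', hω', hne⟩ := Nat.find_spec hdiff
    exact ⟨_, mem_image_of_mem _ hω, _, mem_image_of_mem _ hω', hne⟩

end MassDistribution

/-- A probability distribution on a finite set of nonempty words: the choice of one block of a
random continued fraction. The weights of other words are irrelevant. -/
structure WeightedWords where
  words : Finset (List ℕ+)
  weight : List ℕ+ → ℝ
  ne_nil : ∀ w ∈ words, w ≠ []
  weight_nonneg : ∀ w, 0 ≤ weight w
  sum_weight : ∑ w ∈ words, weight w = 1

namespace WeightedWords

/-- The words of `𝓐` are spread out in dimension `s`, up to the constant `K`: any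
collection of at least two of them contains two whose cylinders lie at a distance `δ` such that the
collection has mass at most `K δ ^ s`. -/
def IsSpread (𝓐 : WeightedWords) (s K : ℝ) : Prop :=
  ∀ R : Finset 𝓐.words, R.Nontrivial → ∃ v ∈ R, ∃ w ∈ R, ∀ θ ∈ Icc (0 : ℝ) 1, ∀ θ' ∈ Icc (0 : ℝ) 1,
    ∑ u ∈ R, 𝓐.weight u ≤ K * |cfEval v θ - cfEval w θ'| ^ s

local instance : MeasurableSpace (List ℕ+) := ⊤

local instance : DiscreteMeasurableSpace (List ℕ+) := ⟨fun _ => trivial⟩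

/-- The distribution of a random word of `𝓐`. -/
noncomputable def measure (𝓐 : WeightedWords) : Measure 𝓐.words :=
  ∑ w : 𝓐.words, ENNReal.ofReal (𝓐.weight w) • Measure.dirac w

lemma measure_coe (𝓐 : WeightedWords) (R : Finset 𝓐.words) :
    𝓐.measure R = ENNReal.ofReal (∑ w ∈ R, 𝓐.weight w) := by
  classical
  rw [measure, Measure.finsetSum_apply,
    ENNReal.ofReal_sum_of_nonneg fun (w : 𝓐.words) _ => 𝓐.weight_nonneg w]
  simp [indicator_apply, -Finset.univ_eq_attach]

instance (𝓐 : WeightedWords) : IsProbabilityMeasure 𝓐.measure where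
  measure_univ := by
    rw [← Finset.coe_univ, measure_coe, Finset.sum_coe_sort, 𝓐.sum_weight, ENNReal.ofReal_one]

variable {𝓐 : ℕ → WeightedWords} {ρ : ℕ → ℝ} {s C : ℝ}

lemma coe_ne_nil (ω : ∀ i, (𝓐 i).words) (n : ℕ) : (ω n : List ℕ+) ≠ [] := (𝓐 n).ne_nil _ (ω n).2

lemma prod_weight_nonneg (ω : ∀ i, (𝓐 i).words) (n : ℕ) :
    0 ≤ ∏ j ∈ Finset.range n, (𝓐 j).weight (ω j) :=
  Finset.prod_nonneg fun j _ => (𝓐 j).weight_nonneg _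

lemma infinitePi_measure_cylinder_inter (ω : ∀ i, (𝓐 i).words) (n : ℕ) (R : Finset (𝓐 n).words) :
    Measure.infinitePi (fun i => (𝓐 i).measure)
        (PiNat.cylinder ω n ∩ (fun ω' => ω' n) ⁻¹' R) =
      ENNReal.ofReal ((∏ j ∈ Finset.range n, (𝓐 j).weight (ω j)) * ∑ w ∈ R, (𝓐 n).weight w) := by
  rw [infinitePi_cylinder_inter _ _ _ R.measurableSet, measure_coe,
    ENNReal.ofReal_mul (prod_weight_nonneg ω n),
    ENNReal.ofReal_prod_of_nonneg fun j _ => (𝓐 j).weight_nonneg _]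
  refine congrArg (· * _) (Finset.prod_congr rfl fun j _ => ?_)
  rw [← Finset.coe_singleton, measure_coe, Finset.sum_singleton]

/-- A sequence `ρ` that controls the growth of the masses of the cylinders of the random continued
fraction with blocks drawn from `𝓐`, in terms of their lengths to the power `s`. -/
structure IsPotential (𝓐 : ℕ → WeightedWords) (s : ℝ) (ρ : ℕ → ℝ) : Prop where
  one_le_zero : 1 ≤ ρ 0
  mul_le_succ : ∀ n, ∀ w ∈ (𝓐 n).words,
    ρ n * (𝓐 n).weight w * (2 * cfDenom w 0) ^ (2 * s) ≤ ρ (n + 1)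

lemma IsPotential.prod_weight_mul_le (hρ : IsPotential 𝓐 s ρ) (hs : 0 ≤ s)
    (ω : ∀ i, (𝓐 i).words) (n : ℕ) :
    (∏ j ∈ Finset.range n, (𝓐 j).weight (ω j)) *
      cfDenom (prefixWord (fun i => ω i) n) 0 ^ (2 * s) ≤ ρ n := by
  induction n with
  | zero => simpa [prefixWord, cfDenom] using hρ.one_le_zero
  | succ n ih =>
    have hv := cfDenom_pos (prefixWord (fun i => ω i) n) le_rfl
    have hw := cfDenom_pos (ω n) le_rfl
    have hvw := cfDenom_pos (prefixWord (fun i => ω i) (n + 1)) le_rfl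
    have hp := prod_weight_nonneg ω n
    have hp' := (𝓐 n).weight_nonneg (ω n)
    refine le_trans ?_ (hρ.mul_le_succ n (ω n) (ω n).2)
    calc (∏ j ∈ Finset.range (n + 1), (𝓐 j).weight (ω j)) *
          cfDenom (prefixWord (fun i => ω i) (n + 1)) 0 ^ (2 * s)
      _ ≤ (∏ j ∈ Finset.range n, (𝓐 j).weight (ω j)) * (𝓐 n).weight (ω n) *
          (cfDenom (prefixWord (fun i => ω i) n) 0 * (2 * cfDenom (ω n) 0)) ^ (2 * s) := by
        rw [Finset.prod_range_succ]
        gcongr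
        exact (cfDenom_append_le _ _).trans_eq (by ring)
      _ = (∏ j ∈ Finset.range n, (𝓐 j).weight (ω j)) *
          cfDenom (prefixWord (fun i => ω i) n) 0 ^ (2 * s) * (𝓐 n).weight (ω n) *
          (2 * cfDenom (ω n) 0) ^ (2 * s) := by
        rw [Real.mul_rpow (by positivity) (by positivity)]
        ring
      _ ≤ ρ n * (𝓐 n).weight (ω n) * (2 * cfDenom (ω n) 0) ^ (2 * s) := by gcongr

lemma IsPotential.nonneg (hρ : IsPotential 𝓐 s ρ) (hs : 0 ≤ s) (ω : ∀ i, (𝓐 i).words) (n : ℕ) :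
    0 ≤ ρ n :=
  have := cfDenom_pos (prefixWord (fun i => ω i) n) le_rfl
  (mul_nonneg (prod_weight_nonneg ω n) (by positivity)).trans (hρ.prod_weight_mul_le hs ω n)

lemma IsPotential.infinitePi_singleton (hρ : IsPotential 𝓐 s ρ) (hs : 0 < s) (hC : ∀ n, ρ n ≤ C)
    (ω : ∀ i, (𝓐 i).words) : Measure.infinitePi (fun i => (𝓐 i).measure) {ω} = 0 := by
  have hbound (n : ℕ) : Measure.infinitePi (fun i => (𝓐 i).measure) {ω} ≤
      ENNReal.ofReal (C * (2 * (1 / 2) ^ n) ^ s) := by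
    have hD := cfDenom_pos (prefixWord (fun i => ω i) n) le_rfl
    have hmem : {ω} ⊆ PiNat.cylinder ω n ∩
        (fun ω' => ω' n) ⁻¹' ((Finset.univ : Finset (𝓐 n).words) : Set (𝓐 n).words) := by
      simp
    refine (measure_mono hmem).trans ?_
    rw [infinitePi_measure_cylinder_inter, Finset.sum_coe_sort, (𝓐 n).sum_weight, mul_one]
    refine ENNReal.ofReal_le_ofReal ?_
    calc ∏ j ∈ Finset.range n, (𝓐 j).weight (ω j)
      _ ≤ ρ n * ((cfDenom (prefixWord (fun i => ω i) n) 0 ^ 2)⁻¹) ^ s := by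
        rw [Real.inv_rpow (by positivity), ← div_eq_mul_inv, le_div_iff₀ (by positivity),
          ← Real.rpow_natCast_mul hD.le]
        exact hρ.prod_weight_mul_le hs.le ω n
      _ ≤ C * (2 * (1 / 2) ^ n) ^ s := by
        have := (hρ.nonneg hs.le ω n).trans (hC n)
        gcongr
        exacts [hC n, inv_sq_cfDenom_prefixWord_le (coe_ne_nil ω) n]
  have hlim : Tendsto (fun n : ℕ => ENNReal.ofReal (C * (2 * (1 / 2 : ℝ) ^ n) ^ s)) atTop
      (nhds 0) := by
    have := (tendsto_two_mul_half_pow.rpow_const (Or.inr hs.le)).const_mul C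
    rw [Real.zero_rpow hs.ne', mul_zero] at this
    simpa using ENNReal.tendsto_ofReal this
  exact le_antisymm (ge_of_tendsto' hlim hbound) bot_le

lemma measurable_cfEval_prefixWord (𝓐 : ℕ → WeightedWords) (n : ℕ) :
    Measurable fun ω : ∀ i, (𝓐 i).words => cfEval (prefixWord (fun i => ω i) n) 0 := by
  have hword : Measurable fun ω : ∀ i, (𝓐 i).words => prefixWord (fun i => ω i) n := by
    induction n with
    | zero => exact measurable_const
    | succ n ih =>
      exact (Measurable.of_discrete (f := fun p : List ℕ+ × List ℕ+ => p.1 ++ p.2)).comp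
        (ih.prodMk (measurable_subtype_coe.comp (measurable_pi_apply n)))
  exact (Measurable.of_discrete (f := fun w : List ℕ+ => cfEval w 0)).comp hword

/-- Points coded by sequences that first differ at the `n`-th block are at least as far apart as
`IsSpread` predicts for that block, scaled by the cylinder of the common prefix. -/
lemma IsPotential.prod_weight_mul_sum_le (hρ : IsPotential 𝓐 s ρ) (hs : 0 ≤ s) {n : ℕ} {K : ℝ}
    (hC : ρ n ≤ C) (hK : ρ n * K ≤ C) {R : Finset (𝓐 n).words}
    {ω ω₁ ω₂ : ∀ i, (𝓐 i).words} {x₁ x₂ : ℝ}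
    (hx₁ : IsCoded (fun i => ω₁ i) x₁) (hx₂ : IsCoded (fun i => ω₂ i) x₂)
    (hω₁ : ω₁ ∈ PiNat.cylinder ω n) (hω₂ : ω₂ ∈ PiNat.cylinder ω n)
    (hspread : ∀ θ ∈ Icc (0 : ℝ) 1, ∀ θ' ∈ Icc (0 : ℝ) 1,
      ∑ u ∈ R, (𝓐 n).weight u ≤ K * |cfEval (ω₁ n) θ - cfEval (ω₂ n) θ'| ^ s) :
    (∏ j ∈ Finset.range n, (𝓐 j).weight (ω j)) * ∑ w ∈ R, (𝓐 n).weight w ≤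
      C * 4 ^ s * |x₁ - x₂| ^ s := by
  have hcommon {ω' : ∀ i, (𝓐 i).words} (hω' : ω' ∈ PiNat.cylinder ω n) :
      prefixWord (fun i => ω' i) n = prefixWord (fun i => ω i) n :=
    prefixWord_congr fun j hj => congrArg _ (hω' j hj)
  obtain ⟨θ₁, hθ₁, rfl⟩ := hx₁ (n + 1)
  obtain ⟨θ₂, hθ₂, rfl⟩ := hx₂ (n + 1)
  simp only [prefixWord, cfEval_append, hcommon hω₁, hcommon hω₂]
  have hD := cfDenom_pos (prefixWord (fun i => ω i) n) le_rfl
  have hρn := hρ.nonneg hs ω n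
  set D := cfDenom (prefixWord (fun i => ω i) n) 0
  set δ := |cfEval (ω₁ n) θ₁ - cfEval (ω₂ n) θ₂|
  have hδ₀ : 0 ≤ δ := abs_nonneg _
  have hmass : ∑ u ∈ R, (𝓐 n).weight u ≤ K * δ ^ s := hspread θ₁ hθ₁ θ₂ hθ₂
  calc (∏ j ∈ Finset.range n, (𝓐 j).weight (ω j)) * ∑ w ∈ R, (𝓐 n).weight w
    _ ≤ ρ n * (D ^ (2 * s))⁻¹ * ∑ w ∈ R, (𝓐 n).weight w := by
      gcongr
      · exact Finset.sum_nonneg fun w _ => (𝓐 n).weight_nonneg w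
      · rw [← div_eq_mul_inv, le_div_iff₀ (by positivity)]
        exact hρ.prod_weight_mul_le hs ω n
    _ ≤ ρ n * (D ^ (2 * s))⁻¹ * (K * δ ^ s) := by gcongr
    _ = ρ n * K * 4 ^ s * (δ / (2 * D) ^ 2) ^ s := by
      rw [Real.div_rpow hδ₀ (by positivity), mul_pow, Real.mul_rpow (by positivity) (by positivity),
        ← Real.rpow_natCast_mul hD.le]
      norm_num
      field_simp
    _ ≤ C * 4 ^ s * |cfEval (prefixWord (fun i => ω i) n) (cfEval (ω₁ n) θ₁) -
          cfEval (prefixWord (fun i => ω i) n) (cfEval (ω₂ n) θ₂)| ^ s := by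
      gcongr
      · exact mul_nonneg (hρn.trans hC) (by positivity)
      · exact le_abs_cfEval_sub _ (cfEval_mem_Icc _ hθ₁) (cfEval_mem_Icc _ hθ₂)

lemma IsPotential.infinitePi_preimage_le (hρ : IsPotential 𝓐 s ρ) (hs : 0 < s)
    (hC : ∀ n, ρ n ≤ C) (hspread : ∀ n, ∃ K, (𝓐 n).IsSpread s K ∧ ρ n * K ≤ C)
    {π : (∀ i, (𝓐 i).words) → ℝ} (hπ : ∀ ω, IsCoded (fun i => ω i) (π ω)) (E : Set ℝ) :
    Measure.infinitePi (fun i => (𝓐 i).measure) (π ⁻¹' E) ≤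
      ENNReal.ofReal (C * 4 ^ s) * Metric.ediam E ^ s := by
  classical
  obtain hsub | hnontrivial := (π ⁻¹' E).subsingleton_or_nontrivial
  · obtain h | ⟨ω, h⟩ := hsub.eq_empty_or_singleton
    · simp [h]
    · simp [h, hρ.infinitePi_singleton hs hC ω]
  obtain ⟨n, hcyl, hn⟩ := exists_subset_cylinder_of_nontrivial hnontrivial
  obtain ⟨ω, hω⟩ := hnontrivial.nonempty
  obtain ⟨K, hspread, hK⟩ := hspread n
  obtain ⟨_, h₁, _, h₂, hfar⟩ :=
    hspread ((fun ω => ω n) '' (π ⁻¹' E)).toFinset (by simpa [Finset.Nontrivial] using hn)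
  obtain ⟨ω₁, hω₁, rfl⟩ := mem_toFinset.1 h₁
  obtain ⟨ω₂, hω₂, rfl⟩ := mem_toFinset.1 h₂
  have hsub : π ⁻¹' E ⊆ PiNat.cylinder ω n ∩
      (fun ω' => ω' n) ⁻¹' (((fun ω => ω n) '' (π ⁻¹' E)).toFinset : Set (𝓐 n).words) := by
    rw [coe_toFinset]
    exact subset_inter (hcyl ω hω) (subset_preimage_image _ _)
  refine (measure_mono hsub).trans ?_
  rw [infinitePi_measure_cylinder_inter]
  refine (ENNReal.ofReal_le_ofReal (hρ.prod_weight_mul_sum_le hs.le (hC n) hK (hπ ω₁) (hπ ω₂)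
    (hcyl ω hω hω₁) (hcyl ω hω hω₂) hfar)).trans ?_
  rw [ENNReal.ofReal_mul' (by positivity), ← ENNReal.ofReal_rpow_of_nonneg (abs_nonneg _) hs.le,
    ← Real.dist_eq, ← edist_dist]
  gcongr
  exact Metric.edist_le_ediam_of_mem hω₁ hω₂

theorem IsPotential.ofReal_le_dimH (hρ : IsPotential 𝓐 s ρ) (hs : 0 < s) (hC : ∀ n, ρ n ≤ C)
    (hspread : ∀ n, ∃ K, (𝓐 n).IsSpread s K ∧ ρ n * K ≤ C) {F : Set ℝ}
    (hF : ∀ (ω : ∀ i, (𝓐 i).words) (x : ℝ), IsCoded (fun i => ω i) x → x ∈ F) :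
    ENNReal.ofReal s ≤ dimH F := by
  choose π hπ using fun ω : ∀ i, (𝓐 i).words => exists_isCoded fun i => ω i
  have hmeas : Measurable π :=
    measurable_of_tendsto_metrizable (measurable_cfEval_prefixWord 𝓐)
      (tendsto_pi_nhds.2 fun ω => (hπ ω).tendsto (coe_ne_nil ω))
  have hpreimage : π ⁻¹' F = univ := eq_univ_of_forall fun ω => hF ω _ (hπ ω)
  refine ofReal_le_dimH_of_measure_le
    (μ := (Measure.infinitePi fun i => (𝓐 i).measure).map π) (K := ENNReal.ofReal (C * 4 ^ s))
    ENNReal.ofReal_ne_top (fun E hE => ?_) fun h₀ => ?_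
  · rw [Measure.map_apply hmeas hE.measurableSet]
    exact hρ.infinitePi_preimage_le hs hC hspread hπ E
  · have := Measure.le_map_apply hmeas.aemeasurable F
      (μ := Measure.infinitePi fun i => (𝓐 i).measure)
    simp [hpreimage, h₀] at this

end WeightedWords

section Digits

variable {U a b : ℕ+} {X s θ θ' : ℝ} {w : List ℕ+}

namespace WeightedWords

lemma IsSpread.mono {𝓐 : WeightedWords} {K K' : ℝ} (h : 𝓐.IsSpread s K) (hK : K ≤ K') :
    𝓐.IsSpread s K' := by
  intro R hR
  obtain ⟨v, hv, w, hw, hfar⟩ := h R hR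
  refine ⟨v, hv, w, hw, fun θ hθ θ' hθ' => (hfar θ hθ θ' hθ').trans ?_⟩
  gcongr

/-- A uniformly distributed even digit between `2U` and `4U`. The cylinders of distinct even digits
are separated by the cylinder of an odd digit. -/
noncomputable def digits (U : ℕ+) : WeightedWords where
  words := (Finset.Ico U (2 * U)).image fun a => [2 * a]
  weight _ := (U : ℝ)⁻¹
  ne_nil w hw := by
    obtain ⟨a, -, rfl⟩ := Finset.mem_image.1 hw
    exact List.cons_ne_nil _ _
  weight_nonneg _ := by positivity
  sum_weight := by
    have hcard : ((Finset.Ico U (2 * U)).image fun a => [2 * a]).card = (U : ℕ) := by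
      rw [Finset.card_image_of_injective _ fun a b h => by simpa using h, PNat.card_Ico]
      push_cast
      omega
    rw [Finset.sum_const, hcard, nsmul_eq_mul]
    exact mul_inv_cancel₀ (by positivity)

lemma exists_of_mem_digits (hw : w ∈ (digits U).words) :
    ∃ a, U ≤ a ∧ a < 2 * U ∧ w = [2 * a] := by
  obtain ⟨a, ha, rfl⟩ := Finset.mem_image.1 hw
  exact ⟨a, (Finset.mem_Ico.1 ha).1, (Finset.mem_Ico.1 ha).2, rfl⟩

/-- A uniformly distributed even digit of the order of `X`. -/
noncomputable def largeDigits (X : ℝ) : WeightedWords := digits ⌊X⌋₊.succPNat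

lemma le_succPNat_floor (X : ℝ) : X ≤ (⌊X⌋₊.succPNat : ℕ) := by
  rw [Nat.succPNat_coe, Nat.cast_succ]
  exact (Nat.lt_floor_add_one X).le

lemma succPNat_floor_le (hX : 1 ≤ X) : ((⌊X⌋₊.succPNat : ℕ) : ℝ) ≤ 2 * X := by
  rw [Nat.succPNat_coe, Nat.cast_succ]
  linarith [Nat.floor_le (zero_le_one.trans hX)]

lemma exists_of_mem_largeDigits (hX : 1 ≤ X) (hw : w ∈ (largeDigits X).words) :
    ∃ a : ℕ+, X ≤ a ∧ a ≤ 8 * X ∧ w = [a] := by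
  obtain ⟨a, hUa, haU, rfl⟩ := exists_of_mem_digits hw
  have hUa' : ((⌊X⌋₊.succPNat : ℕ) : ℝ) ≤ a := mod_cast hUa
  have haU' : (a : ℝ) ≤ 2 * (⌊X⌋₊.succPNat : ℕ) := mod_cast haU.le
  refine ⟨2 * a, ?_, ?_, rfl⟩ <;> push_cast
  · linarith [le_succPNat_floor X]
  · linarith [succPNat_floor_le hX]

lemma largeDigits_weight_mul_rpow_le (hs : 0 ≤ s) (hX : 1 ≤ X) (hw : w ∈ (largeDigits X).words) :
    (largeDigits X).weight w * (2 * cfDenom w 0) ^ (2 * s) ≤ 16 ^ (2 * s) * X ^ (2 * s - 1) := by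
  obtain ⟨a, -, ha, rfl⟩ := exists_of_mem_digits hw
  have ha' : (a : ℝ) ≤ 2 * (⌊X⌋₊.succPNat : ℕ) := mod_cast ha.le
  have hbase : 2 * cfDenom [2 * a] 0 ≤ 16 * X := by
    simp only [cfDenom, cfEval]
    push_cast
    linarith [succPNat_floor_le hX]
  have hD := cfDenom_pos [2 * a] le_rfl
  calc ((⌊X⌋₊.succPNat : ℕ) : ℝ)⁻¹ * (2 * cfDenom [2 * a] 0) ^ (2 * s)
    _ ≤ X⁻¹ * (16 * X) ^ (2 * s) := by
      gcongr
      exact le_succPNat_floor X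
    _ = 16 ^ (2 * s) * X ^ (2 * s - 1) := by
      rw [Real.mul_rpow (by norm_num) (by positivity), Real.rpow_sub_one (by positivity)]
      ring

end WeightedWords

lemma div_le_abs_cfEval_singleton_sub (hb : b ≤ 2 * U) (hab : a < b)
    (hθ : θ ∈ Icc (0 : ℝ) 1) (hθ' : θ' ∈ Icc (0 : ℝ) 1) :
    ((b : ℝ) - a) / (5 * U) ^ 2 ≤ |cfEval [2 * a] θ - cfEval [2 * b] θ'| := by
  have hab' : (a : ℝ) + 1 ≤ b := mod_cast hab
  have hb' : (b : ℝ) ≤ 2 * U := mod_cast hb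
  have hU := one_le_pnatCast U
  have hpos : 0 < 2 * (a : ℝ) + θ := by linarith [one_le_pnatCast a, hθ.1]
  have hpos' : 0 < 2 * (b : ℝ) + θ' := by linarith [one_le_pnatCast b, hθ'.1]
  simp only [cfEval]
  push_cast
  rw [inv_sub_inv hpos.ne' hpos'.ne', abs_of_nonneg
    (div_nonneg (by linarith [hθ.2, hθ'.1]) (by positivity)), sq]
  refine div_le_div₀ (by linarith [hθ.2, hθ'.1]) (by linarith [hθ.2, hθ'.1]) (by positivity) ?_
  gcongr <;> linarith [hθ.2, hθ'.2]

lemma exists_lt_card_le_of_injective {ι : Type*} {f : ι → ℕ} (hf : Function.Injective f)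
    {R : Finset ι} (hR : R.Nontrivial) :
    ∃ v ∈ R, ∃ w ∈ R, f v < f w ∧ (R.card : ℝ) ≤ 2 * ((f w : ℝ) - f v) := by
  obtain ⟨v, hv, hmin⟩ := R.exists_min_image f hR.nonempty
  obtain ⟨w, hw, hmax⟩ := R.exists_max_image f hR.nonempty
  have hlt : f v < f w := by
    obtain ⟨u, hu, huv⟩ := hR.exists_ne v
    exact ((hmin u hu).lt_of_ne fun h => huv (hf h.symm)).trans_le (hmax u hu)
  have hcard : R.card ≤ (Finset.Icc (f v) (f w)).card :=
    Finset.card_le_card_of_injOn f (fun u hu => Finset.mem_Icc.2 ⟨hmin u hu, hmax u hu⟩) hf.injOn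
  rw [Nat.card_Icc] at hcard
  refine ⟨v, hv, w, hw, hlt, ?_⟩
  rw [← Nat.cast_sub hlt.le]
  exact_mod_cast (by omega : R.card ≤ 2 * (f w - f v))

lemma WeightedWords.isSpread_digits (U : ℕ+) (hs₀ : 0 ≤ s) (hs₁ : s ≤ 1) :
    (digits U).IsSpread s (2 * (25 * U) ^ s) := by
  intro R hR
  choose f hUf hfU hf using fun u : (digits U).words => exists_of_mem_digits u.2
  have hinj : Function.Injective fun u => (f u : ℕ) := fun u v huv =>
    Subtype.ext ((hf u).trans (PNat.coe_injective huv ▸ (hf v).symm))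
  obtain ⟨v, hv, w, hw, hlt, hcard⟩ := exists_lt_card_le_of_injective hinj hR
  refine ⟨v, hv, w, hw, fun θ hθ θ' hθ' => ?_⟩
  have hδ : 0 ≤ (f w : ℝ) - f v := sub_nonneg.2 (mod_cast hlt.le)
  have hδU : ((f w : ℝ) - f v) / U ≤ 1 := by
    have hfw : (f w : ℝ) ≤ 2 * U := mod_cast (hfU w).le
    have hfv : (U : ℝ) ≤ f v := mod_cast hUf v
    exact (div_le_one (by positivity)).2 (by linarith)
  calc ∑ _u ∈ R, (U : ℝ)⁻¹ = R.card * (U : ℝ)⁻¹ := by rw [Finset.sum_const, nsmul_eq_mul]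
    _ ≤ 2 * ((f w : ℝ) - f v) * (U : ℝ)⁻¹ := by gcongr
    _ = 2 * (((f w : ℝ) - f v) / U) := by ring
    _ ≤ 2 * (((f w : ℝ) - f v) / U) ^ s := by
      gcongr
      exact Real.self_le_rpow_of_le_one (by positivity) hδU hs₁
    _ = 2 * (25 * U) ^ s * (((f w : ℝ) - f v) / (5 * U) ^ 2) ^ s := by
      rw [mul_assoc, ← Real.mul_rpow (by positivity) (by positivity)]
      congr 2
      field_simp
      ring
    _ ≤ 2 * (25 * U) ^ s * |cfEval v θ - cfEval w θ'| ^ s := by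
      rw [hf v, hf w]
      gcongr
      exact div_le_abs_cfEval_singleton_sub (hfU w).le hlt hθ hθ'

lemma WeightedWords.isSpread_largeDigits (hs₀ : 0 ≤ s) (hs₁ : s ≤ 1) (hX : 1 ≤ X) :
    (largeDigits X).IsSpread s (2 * (50 * X) ^ s) := by
  refine (isSpread_digits _ hs₀ hs₁).mono ?_
  gcongr 2 * ?_ ^ s
  linarith [succPNat_floor_le hX]

end Digits

section Blocks

variable {B s : ℝ} {n : ℕ}

lemma exists_pos_forall_le_dist {ι X : Type*} [MetricSpace X] {A : Finset ι} {K : ι → Set X}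
    (hK : ∀ i ∈ A, IsCompact (K i)) (hdisj : (A : Set ι).PairwiseDisjoint K) :
    ∃ κ > 0, ∀ i ∈ A, ∀ j ∈ A, i ≠ j → ∀ x ∈ K i, ∀ y ∈ K j, κ ≤ dist x y := by
  have hev : ∀ᶠ κ in nhdsWithin (0 : ℝ) (Ioi 0),
      ∀ i ∈ A, ∀ j ∈ A, i ≠ j → ∀ x ∈ K i, ∀ y ∈ K j, κ ≤ dist x y := by
    simp only [Filter.eventually_all_finset]
    intro i hi j hj
    obtain rfl | hne := eq_or_ne i j
    · exact Eventually.of_forall fun _ h => (h rfl).elim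
    obtain ⟨κ, hκ, hsep⟩ :=
      Metric.exists_pos_forall_lt_edist (hK i hi) (hK j hj).isClosed (hdisj hi hj hne)
    filter_upwards [Ioc_mem_nhdsGT (NNReal.coe_pos.2 hκ)] with κ' hκ' _ x hx y hy
    refine hκ'.2.trans ?_
    have := (hsep x hx y hy).le
    rw [edist_nndist] at this
    exact_mod_cast this
  obtain ⟨κ, hsep, hκ⟩ := (hev.and self_mem_nhdsWithin).exists
  exact ⟨κ, hκ, hsep⟩

namespace WeightedWords

lemma exists_isSpread_of_pairwiseDisjoint (𝓐 : WeightedWords) (hs : 0 ≤ s)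
    (hdisj : (𝓐.words : Set (List ℕ+)).PairwiseDisjoint fun w => cfEval w '' Icc 0 1) :
    ∃ K ≥ 0, 𝓐.IsSpread s K := by
  obtain ⟨κ, hκ, hsep⟩ := exists_pos_forall_le_dist
    (fun w _ => isCompact_Icc.image_of_continuousOn (continuousOn_cfEval w)) hdisj
  refine ⟨(κ ^ s)⁻¹, by positivity, fun R ⟨v, hv, w, hw, hvw⟩ => ⟨v, hv, w, hw, ?_⟩⟩
  intro θ hθ θ' hθ'
  have hfar : κ ≤ |cfEval v θ - cfEval w θ'| :=
    hsep v v.2 w w.2 (Subtype.coe_injective.ne hvw) _ (mem_image_of_mem _ hθ) _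
      (mem_image_of_mem _ hθ')
  calc ∑ u ∈ R, 𝓐.weight u ≤ ∑ u : 𝓐.words, 𝓐.weight u :=
      Finset.sum_le_sum_of_subset_of_nonneg (Finset.subset_univ R)
        fun u _ _ => 𝓐.weight_nonneg u
    _ = 1 := by rw [Finset.sum_coe_sort, 𝓐.sum_weight]
    _ = (κ ^ s)⁻¹ * κ ^ s := (inv_mul_cancel₀ (by positivity)).symm
    _ ≤ (κ ^ s)⁻¹ * |cfEval v θ - cfEval w θ'| ^ s := by gcongr

/-- The Gibbs distribution on `A` at inverse temperature `s`: a word has weight proportional to the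
`s`-th power of the length of its cylinder. -/
noncomputable def gibbs (A : Finset (List ℕ+)) (hA : A.Nonempty) (hnil : ∀ w ∈ A, w ≠ []) (s : ℝ) :
    WeightedWords where
  words := A
  weight w := cfDenom w 0 ^ (-(2 * s)) / ∑ v ∈ A, cfDenom v 0 ^ (-(2 * s))
  ne_nil := hnil
  weight_nonneg w :=
    have hpos (v : List ℕ+) : 0 ≤ cfDenom v 0 ^ (-(2 * s)) :=
      Real.rpow_nonneg (cfDenom_pos v le_rfl).le _
    div_nonneg (hpos w) (Finset.sum_nonneg fun v _ => hpos v)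
  sum_weight := by
    rw [← Finset.sum_div]
    exact div_self
      (Finset.sum_pos (fun v _ => Real.rpow_pos_of_pos (cfDenom_pos v le_rfl) _) hA).ne'

lemma gibbs_weight_mul_rpow (A : Finset (List ℕ+)) (hA : A.Nonempty) (hnil : ∀ w ∈ A, w ≠ [])
    (s : ℝ) (w : List ℕ+) :
    (gibbs A hA hnil s).weight w * (2 * cfDenom w 0) ^ (2 * s) =
      2 ^ (2 * s) / ∑ v ∈ A, cfDenom v 0 ^ (-(2 * s)) := by
  have hD := cfDenom_pos w le_rfl
  change cfDenom w 0 ^ (-(2 * s)) / _ * _ = _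
  rw [Real.mul_rpow zero_le_two hD.le, Real.rpow_neg hD.le]
  field_simp

end WeightedWords

/-- Blocks for the bounded part of the continued fractions: words of a fixed length, with a
distribution for which cylinders have mass at most the power `s` of their length, with a factor
`B ^ (s² (length + 1))` to spare. -/
structure Blocks (B s : ℝ) extends WeightedWords where
  length : ℕ
  length_eq : ∀ w ∈ words, w.length = length
  maxDigit : ℕ
  le_maxDigit : ∀ w ∈ words, ∀ a ∈ w, (a : ℕ) ≤ maxDigit
  spread : ℝ
  spread_nonneg : 0 ≤ spread
  isSpread : toWeightedWords.IsSpread s spread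
  weight_mul_rpow_le : ∀ w ∈ words,
    weight w * (2 * cfDenom w 0) ^ (2 * s) ≤ B ^ (-(s ^ 2 * (length + 1)))

lemma disjoint_cfEval_append_two {v w : List ℕ+} (hlen : v.length = w.length) (hvw : v ≠ w) :
    Disjoint (cfEval (v ++ [2]) '' Icc 0 1) (cfEval (w ++ [2]) '' Icc 0 1) := by
  have hmem {θ : ℝ} (hθ : θ ∈ Icc (0 : ℝ) 1) : cfEval [2] θ ∈ Ioo (0 : ℝ) 1 := by
    have := hθ.1
    simp only [cfEval]
    push_cast
    exact ⟨by positivity, inv_lt_one_of_one_lt₀ (by linarith)⟩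
  rw [disjoint_left]
  rintro _ ⟨θ, hθ, rfl⟩ ⟨θ', hθ', heq⟩
  rw [cfEval_append, cfEval_append] at heq
  exact hvw (eq_of_cfEval_eq hlen (hmem hθ) (hmem hθ') heq.symm)

lemma four_rpow_neg_mul_cfDenom_rpow_le (hs : 0 ≤ s) (w : List ℕ+) :
    4 ^ (-(2 * s)) * cfDenom w 0 ^ (-(2 * s)) ≤ cfDenom (w ++ [2]) 0 ^ (-(2 * s)) := by
  have hD := cfDenom_pos w le_rfl
  rw [← Real.mul_rpow (by norm_num) hD.le]
  refine Real.rpow_le_rpow_of_nonpos (cfDenom_pos _ le_rfl) ?_ (by linarith)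
  refine (cfDenom_append_le w [2]).trans_eq ?_
  simp only [cfDenom, cfEval]
  push_cast
  ring

lemma exists_finset_le_sum (hB : 1 < B) (hs₀ : 0 ≤ s) (hs : s < tExp B) (K : ℝ) :
    ∃ (n : ℕ) (A : Finset (Fin n → ℕ+)),
      K * B ^ (s ^ 2 * n) < ∑ a ∈ A, cfDenom (List.ofFn a) 0 ^ (-(2 * s)) := by
  obtain ⟨c, hc, hfreq⟩ := exists_frequently_le_partitionSum hB hs₀ hs
  have hlarge : ∀ᶠ n : ℕ in atTop, K < B ^ ((c - s ^ 2) * n) :=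
    ((tendsto_rpow_atTop_of_base_gt_one B hB).comp
      (tendsto_natCast_atTop_atTop.const_mul_atTop (sub_pos.2 hc))).eventually_gt_atTop K
  obtain ⟨n, hn, hK⟩ := (hfreq.and_eventually hlarge).exists
  have hB₀ := one_pos.trans hB
  have hlt : ENNReal.ofReal (K * B ^ (s ^ 2 * n)) < partitionSum s n := by
    refine (ENNReal.ofReal_lt_ofReal_iff (by positivity)).2 ?_ |>.trans_le hn
    calc K * B ^ (s ^ 2 * n) < B ^ ((c - s ^ 2) * n) * B ^ (s ^ 2 * n) := by gcongr
      _ = B ^ (c * n) := by rw [← Real.rpow_add hB₀]; ring_nf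
  rw [partitionSum, ENNReal.tsum_eq_iSup_sum] at hlt
  obtain ⟨A, hA⟩ := lt_iSup_iff.1 hlt
  rw [← ENNReal.ofReal_sum_of_nonneg fun a _ =>
    Real.rpow_nonneg (cfDenom_pos _ le_rfl).le _] at hA
  exact ⟨n, A, (ENNReal.ofReal_lt_ofReal_iff'.1 hA).1⟩

lemma exists_finset_words_le_sum (hB : 1 < B) (hs₀ : 0 ≤ s) (hs : s < tExp B) :
    ∃ (n : ℕ) (A : Finset (List ℕ+)), (∀ w ∈ A, w.length = n + 1) ∧
      (A : Set (List ℕ+)).PairwiseDisjoint (fun w => cfEval w '' Icc 0 1) ∧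
      2 ^ (2 * s) * B ^ (s ^ 2 * (n + 1 + 1)) < ∑ w ∈ A, cfDenom w 0 ^ (-(2 * s)) := by
  obtain ⟨n, A, hA⟩ := exists_finset_le_sum hB hs₀ hs
    (4 ^ (2 * s) * (2 ^ (2 * s) * B ^ (2 * s ^ 2)))
  -- The closed cylinders of adjacent words share an endpoint; a final digit `2` separates them.
  have hinj : Function.Injective fun a : Fin n → ℕ+ => List.ofFn a ++ [2] := fun a b h =>
    List.ofFn_injective (List.append_cancel_right h)
  refine ⟨n, A.image fun a => List.ofFn a ++ [2], ?_, ?_, ?_⟩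
  · simp
  · rw [Finset.coe_image, hinj.injOn.pairwiseDisjoint_image]
    exact fun a _ b _ hab =>
      disjoint_cfEval_append_two (by simp) (List.ofFn_injective.ne hab)
  · rw [Finset.sum_image hinj.injOn]
    calc 2 ^ (2 * s) * B ^ (s ^ 2 * (n + 1 + 1))
      _ = 4 ^ (-(2 * s)) * (4 ^ (2 * s) * (2 ^ (2 * s) * B ^ (2 * s ^ 2)) * B ^ (s ^ 2 * n)) := by
        rw [show s ^ 2 * (n + 1 + 1) = 2 * s ^ 2 + s ^ 2 * n by ring,
          Real.rpow_add (one_pos.trans hB), Real.rpow_neg (by norm_num)]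
        field_simp
      _ < 4 ^ (-(2 * s)) * ∑ a ∈ A, cfDenom (List.ofFn a) 0 ^ (-(2 * s)) := by gcongr
      _ ≤ ∑ a ∈ A, cfDenom (List.ofFn a ++ [2]) 0 ^ (-(2 * s)) := by
        rw [Finset.mul_sum]
        exact Finset.sum_le_sum fun a _ => four_rpow_neg_mul_cfDenom_rpow_le hs₀ _

theorem nonempty_blocks (hB : 1 < B) (hs₀ : 0 ≤ s) (hs : s < tExp B) : Nonempty (Blocks B s) := by
  obtain ⟨n, A, hlen, hdisj, hsum⟩ := exists_finset_words_le_sum hB hs₀ hs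
  have hB₀ := one_pos.trans hB
  have hpos : 0 < ∑ w ∈ A, cfDenom w 0 ^ (-(2 * s)) := lt_trans (by positivity) hsum
  have hA : A.Nonempty := Finset.nonempty_of_sum_ne_zero hpos.ne'
  have hnil : ∀ w ∈ A, w ≠ [] := fun w hw => List.ne_nil_of_length_eq_add_one (hlen w hw)
  obtain ⟨K, hK, hspread⟩ :=
    (WeightedWords.gibbs A hA hnil s).exists_isSpread_of_pairwiseDisjoint hs₀ hdisj
  refine ⟨{
    toWeightedWords := WeightedWords.gibbs A hA hnil s
    length := n + 1
    length_eq := hlen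
    maxDigit := A.sup fun w => (w.map PNat.val).sum
    le_maxDigit := fun w hw a ha =>
      (List.le_sum_of_mem (List.mem_map_of_mem ha)).trans
        (Finset.le_sup (f := fun w => (w.map PNat.val).sum) hw)
    spread := K
    spread_nonneg := hK
    isSpread := hspread
    weight_mul_rpow_le := fun w _ => ?_ }⟩
  rw [WeightedWords.gibbs_weight_mul_rpow, Real.rpow_neg hB₀.le, div_le_iff₀ hpos,
    ← div_eq_inv_mul, le_div_iff₀ (by positivity)]
  exact_mod_cast hsum.le

end Blocks

/-- The stages of the construction: `fst N` and `snd N` choose the two large digits of a large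
product, and `block c N` chooses a bounded block to be followed by `c` further ones. In all cases
`N` is the number of digits chosen so far. -/
inductive Stage
  | fst (N : ℕ)
  | snd (N : ℕ)
  | block (c N : ℕ)

namespace Stage

/-- The number of digits that have been chosen before the stage. -/
def position : Stage → ℕ
  | fst N => N
  | snd N => N
  | block _ N => N

/-- The stage that follows the given one, when bounded blocks have length `ℓ` and the second large
digit at position `N` is followed by `N + c₀ + 1` of them. -/
def next (ℓ c₀ : ℕ) : Stage → Stage
  | fst N => snd (N + 1)
  | snd N => block (N + c₀) (N + 1)
  | block 0 N => fst (N + ℓ)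
  | block (c + 1) N => block c (N + ℓ)

/-- The distribution of the word chosen at a stage. The two large digits at positions `N` and
`N + 1` are of order `B ^ (s (N + 1))` and `B ^ ((1 - s) (N + 1))`. -/
noncomputable def words {B s : ℝ} (𝓑 : Blocks B s) : Stage → WeightedWords
  | fst N => .largeDigits (B ^ (s * (N + 1)))
  | snd N => .largeDigits (B ^ ((1 - s) * N))
  | block _ _ => 𝓑.toWeightedWords

/-- The bound for the ratio of the mass of a cylinder to the power `s` of its length when the stage
is reached. -/
noncomputable def potential (B s : ℝ) : Stage → ℝ
  | fst N => B ^ (-(s ^ 2 * N))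
  | snd N => 16 ^ (2 * s) * B ^ (s ^ 2 - s * (1 - s) * N)
  | block c N => B ^ (s ^ 2 * (c + 1 - N))

/-- The sequence of stages of the construction. -/
def seq (ℓ c₀ : ℕ) : ℕ → Stage
  | 0 => fst 0
  | i + 1 => (seq ℓ c₀ i).next ℓ c₀

section Sequence

variable {ℓ c₀ i c N : ℕ}

lemma le_of_seq_eq_block (h : seq ℓ c₀ i = block c N) : c ≤ N + c₀ := by
  induction i generalizing c N with
  | zero => cases h
  | succ i ih =>
    rw [seq] at h
    rcases hi : seq ℓ c₀ i with N' | N' | ⟨_ | c', N'⟩ <;> rw [hi] at h <;> cases h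
    · omega
    · have := ih hi
      omega

lemma exists_seq_eq_fst_of_block (h : seq ℓ c₀ i = block c N) :
    ∃ j ≥ i, ∃ N', seq ℓ c₀ j = fst N' := by
  induction c generalizing i N with
  | zero => exact ⟨i + 1, i.le_succ, N + ℓ, by rw [seq, h, next]⟩
  | succ c ih =>
    obtain ⟨j, hj, hN'⟩ := ih (i := i + 1) (N := N + ℓ) (by rw [seq, h, next])
    exact ⟨j, i.le_succ.trans hj, hN'⟩

lemma exists_seq_eq_fst (ℓ c₀ i : ℕ) : ∃ j ≥ i, ∃ N, seq ℓ c₀ j = fst N := by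
  rcases hi : seq ℓ c₀ i with N | N | ⟨c, N⟩
  · exact ⟨i, le_rfl, N, hi⟩
  · obtain ⟨j, hj, hN⟩ := exists_seq_eq_fst_of_block (i := i + 1) (by rw [seq, hi, next])
    exact ⟨j, i.le_succ.trans hj, hN⟩
  · exact exists_seq_eq_fst_of_block hi

end Sequence

variable {B s : ℝ} {𝓑 : Blocks B s} {c₀ i : ℕ}

lemma one_le_rpow_fst (hB : 1 < B) (hs : 0 ≤ s) (N : ℕ) : 1 ≤ B ^ (s * (N + 1)) :=
  Real.one_le_rpow hB.le (by positivity)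

lemma one_le_rpow_snd (hB : 1 < B) (hs : s ≤ 1) (N : ℕ) : 1 ≤ B ^ ((1 - s) * N) :=
  Real.one_le_rpow hB.le (mul_nonneg (sub_nonneg.2 hs) N.cast_nonneg)

lemma position_next (hB : 1 < B) (hs₀ : 0 ≤ s) (hs₁ : s ≤ 1) (c₀ : ℕ) (σ : Stage) {w : List ℕ+}
    (hw : w ∈ (σ.words 𝓑).words) : (σ.next 𝓑.length c₀).position = σ.position + w.length := by
  rcases σ with N | N | ⟨_ | c, N⟩
  · obtain ⟨a, -, -, rfl⟩ := WeightedWords.exists_of_mem_largeDigits (one_le_rpow_fst hB hs₀ N) hw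
    rfl
  · obtain ⟨a, -, -, rfl⟩ := WeightedWords.exists_of_mem_largeDigits (one_le_rpow_snd hB hs₁ N) hw
    rfl
  all_goals
    rw [𝓑.length_eq w hw]
    rfl

lemma coe_le_of_mem_words (hB : 1 < B) (hs₀ : 0 ≤ s) (hs₁ : s ≤ 1) (σ : Stage) {w : List ℕ+}
    (hw : w ∈ (σ.words 𝓑).words) {a : ℕ+} (ha : a ∈ w) :
    (a : ℝ) ≤ (𝓑.maxDigit + 8) * B ^ (max s (1 - s) * (σ.position + 1)) := by
  have hlarge {X : ℝ} (hX : 1 ≤ X) (hw : w ∈ (WeightedWords.largeDigits X).words) :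
      (a : ℝ) ≤ (𝓑.maxDigit + 8) * X := by
    obtain ⟨b, -, hb, rfl⟩ := WeightedWords.exists_of_mem_largeDigits hX hw
    rw [List.mem_singleton.1 ha]
    nlinarith [𝓑.maxDigit.cast_nonneg (α := ℝ)]
  rcases σ with N | N | ⟨c, N⟩
  · refine (hlarge (one_le_rpow_fst hB hs₀ N) hw).trans ?_
    gcongr _ * B ^ (?_ * _)
    exacts [hB.le, le_max_left _ _]
  · refine (hlarge (one_le_rpow_snd hB hs₁ N) hw).trans ?_
    gcongr _ * B ^ ?_
    exacts [hB.le, mul_le_mul (le_max_right _ _) (by simp [position]) N.cast_nonneg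
      (hs₀.trans (le_max_left _ _))]
  · have haM : (a : ℝ) ≤ 𝓑.maxDigit := mod_cast 𝓑.le_maxDigit w hw a ha
    have hone : 1 ≤ B ^ (max s (1 - s) * ((block c N).position + 1)) :=
      Real.one_le_rpow hB.le (mul_nonneg (hs₀.trans (le_max_left _ _)) (by positivity))
    nlinarith [𝓑.maxDigit.cast_nonneg (α := ℝ)]

lemma potential_nonneg (hB : 1 < B) (σ : Stage) : 0 ≤ σ.potential B s := by
  have := one_pos.trans hB
  cases σ <;> rw [potential] <;> positivity

lemma potential_fst_mul_le (hB : 1 < B) (hs₀ : 0 ≤ s) (N : ℕ) {w : List ℕ+}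
    (hw : w ∈ ((fst N).words 𝓑).words) :
    (fst N).potential B s * (((fst N).words 𝓑).weight w * (2 * cfDenom w 0) ^ (2 * s)) ≤
      (snd (N + 1)).potential B s := by
  have hB₀ := one_pos.trans hB
  calc _ ≤ B ^ (-(s ^ 2 * N)) * (16 ^ (2 * s) * (B ^ (s * (N + 1))) ^ (2 * s - 1)) :=
      mul_le_mul_of_nonneg_left
        (WeightedWords.largeDigits_weight_mul_rpow_le hs₀ (one_le_rpow_fst hB hs₀ N) hw)
        (by positivity)
    _ = 16 ^ (2 * s) * B ^ (s ^ 2 - s * (1 - s) * (N + 1 : ℕ)) := by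
      rw [← Real.rpow_mul hB₀.le, mul_left_comm, ← Real.rpow_add hB₀]
      push_cast
      ring_nf

lemma potential_snd_mul_le (hB : 1 < B) (hs₀ : 0 ≤ s) (hs₁ : s ≤ 1)
    (hc₀ : (16 ^ (2 * s)) ^ 2 * B ^ s ^ 2 ≤ B ^ (s ^ 2 * c₀)) (N : ℕ) {w : List ℕ+}
    (hw : w ∈ ((snd N).words 𝓑).words) :
    (snd N).potential B s * (((snd N).words 𝓑).weight w * (2 * cfDenom w 0) ^ (2 * s)) ≤
      (block (N + c₀) (N + 1)).potential B s := by
  have hB₀ := one_pos.trans hB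
  calc _ ≤ 16 ^ (2 * s) * B ^ (s ^ 2 - s * (1 - s) * N) *
          (16 ^ (2 * s) * (B ^ ((1 - s) * N)) ^ (2 * s - 1)) :=
      mul_le_mul_of_nonneg_left
        (WeightedWords.largeDigits_weight_mul_rpow_le hs₀ (one_le_rpow_snd hB hs₁ N) hw)
        (by positivity)
    _ = (16 ^ (2 * s)) ^ 2 * B ^ (s ^ 2 - (1 - s) ^ 2 * N) := by
      rw [← Real.rpow_mul hB₀.le, mul_mul_mul_comm, ← Real.rpow_add hB₀]
      ring_nf
    _ ≤ (16 ^ (2 * s)) ^ 2 * B ^ s ^ 2 := by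
      gcongr
      · exact hB.le
      · exact sub_le_self _ (by positivity)
    _ ≤ B ^ (s ^ 2 * c₀) := hc₀
    _ = B ^ (s ^ 2 * ((N + c₀ : ℕ) + 1 - (N + 1 : ℕ))) := by
      push_cast
      ring_nf

lemma potential_block_mul_le (hB : 1 < B) (c c₀ N : ℕ) {w : List ℕ+} (hw : w ∈ 𝓑.words) :
    (block c N).potential B s * (𝓑.weight w * (2 * cfDenom w 0) ^ (2 * s)) ≤
      ((block c N).next 𝓑.length c₀).potential B s := by
  have hB₀ := one_pos.trans hB
  calc _ ≤ B ^ (s ^ 2 * (c + 1 - N)) * B ^ (-(s ^ 2 * (𝓑.length + 1))) :=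
      mul_le_mul_of_nonneg_left (𝓑.weight_mul_rpow_le w hw) (by positivity)
    _ = B ^ (s ^ 2 * (c - N - 𝓑.length)) := by
      rw [← Real.rpow_add hB₀]
      ring_nf
    _ = _ := by
      cases c <;> rw [next, potential] <;> push_cast <;> ring_nf

lemma isPotential_seq (hB : 1 < B) (hs₀ : 0 ≤ s) (hs₁ : s ≤ 1)
    (hc₀ : (16 ^ (2 * s)) ^ 2 * B ^ s ^ 2 ≤ B ^ (s ^ 2 * c₀)) :
    WeightedWords.IsPotential (fun i => (seq 𝓑.length c₀ i).words 𝓑) s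
      fun i => (seq 𝓑.length c₀ i).potential B s where
  one_le_zero := by simp [seq, potential]
  mul_le_succ i w := by
    intro hw
    rw [mul_assoc, seq]
    rcases hi : seq 𝓑.length c₀ i with N | N | ⟨c, N⟩ <;> rw [hi] at hw
    · exact potential_fst_mul_le hB hs₀ N hw
    · exact potential_snd_mul_le hB hs₀ hs₁ hc₀ N hw
    · exact potential_block_mul_le hB c c₀ N hw

lemma potential_seq_le (hB : 1 < B) (hs₀ : 0 ≤ s) (hs₁ : s ≤ 1) (ℓ c₀ i : ℕ) :
    (seq ℓ c₀ i).potential B s ≤ 16 ^ (2 * s) * B ^ (s ^ 2 * (c₀ + 1)) := by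
  have hone : (1 : ℝ) ≤ 16 ^ (2 * s) := Real.one_le_rpow (by norm_num) (by positivity)
  rcases hi : seq ℓ c₀ i with N | N | ⟨c, N⟩ <;> rw [potential]
  · refine le_trans ?_ (le_mul_of_one_le_left (by positivity) hone)
    gcongr
    · exact hB.le
    · exact (neg_nonpos.2 (by positivity)).trans (by positivity)
  · gcongr 16 ^ (2 * s) * B ^ ?_
    · exact hB.le
    · exact (sub_le_self _ (by positivity)).trans (le_mul_of_one_le_right (sq_nonneg s) (by simp))
  · refine le_trans ?_ (le_mul_of_one_le_left (by positivity) hone)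
    have hc : (c : ℝ) ≤ N + c₀ := mod_cast le_of_seq_eq_block hi
    gcongr
    · exact hB.le
    · linarith

lemma exists_isSpread_words (hB : 1 < B) (hs₀ : 0 ≤ s) (hs₁ : s ≤ 1) (σ : Stage) :
    ∃ K, (σ.words 𝓑).IsSpread s K ∧
      σ.potential B s * K ≤
        2 * 50 ^ s * (16 ^ (2 * s) * B ^ s ^ 2) + σ.potential B s * 𝓑.spread := by
  have hB₀ := one_pos.trans hB
  have hspread := mul_nonneg (σ.potential_nonneg hB (s := s)) 𝓑.spread_nonneg
  rcases σ with N | N | ⟨c, N⟩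
  · have hX := one_le_rpow_fst hB hs₀ N
    refine ⟨_, WeightedWords.isSpread_largeDigits hs₀ hs₁ hX, le_add_of_le_of_nonneg ?_ hspread⟩
    have hone : (1 : ℝ) ≤ 16 ^ (2 * s) := Real.one_le_rpow (by norm_num) (by positivity)
    calc _ = 2 * 50 ^ s * (B ^ (-(s ^ 2 * N)) * B ^ (s * (N + 1) * s)) := by
          rw [Real.mul_rpow (by norm_num) (by positivity), ← Real.rpow_mul hB₀.le, potential]
          ring
      _ = 2 * 50 ^ s * B ^ s ^ 2 := by
          rw [← Real.rpow_add hB₀]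
          ring_nf
      _ ≤ 2 * 50 ^ s * (16 ^ (2 * s) * B ^ s ^ 2) := by
          gcongr
          exact le_mul_of_one_le_left (by positivity) hone
  · have hX := one_le_rpow_snd hB hs₁ N
    refine ⟨_, WeightedWords.isSpread_largeDigits hs₀ hs₁ hX, le_add_of_le_of_nonneg ?_ hspread⟩
    refine le_of_eq ?_
    calc _ = 2 * 50 ^ s * (16 ^ (2 * s) *
            (B ^ (s ^ 2 - s * (1 - s) * N) * B ^ ((1 - s) * N * s))) := by
          rw [Real.mul_rpow (by norm_num) (by positivity), ← Real.rpow_mul hB₀.le, potential]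
          ring
      _ = 2 * 50 ^ s * (16 ^ (2 * s) * B ^ s ^ 2) := by
          rw [← Real.rpow_add hB₀]
          ring_nf
  · exact ⟨_, 𝓑.isSpread, le_add_of_nonneg_left (by positivity)⟩

end Stage

section CodedPoints

variable {ω : ℕ → List ℕ+} {x θ : ℝ}

lemma cfEval_append_mem_Ioo {v w : List ℕ+} (hv : v ≠ []) (hw : w ≠ []) (hθ : θ ∈ Icc (0 : ℝ) 1) :
    cfEval (v ++ w) θ ∈ Ioo (0 : ℝ) 1 := by
  obtain ⟨a, v, rfl⟩ := List.exists_cons_of_ne_nil hv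
  obtain ⟨b, w, rfl⟩ := List.exists_cons_of_ne_nil hw
  have hpos : 0 < cfEval (b :: w) θ :=
    inv_pos.2 (add_pos_of_pos_of_nonneg (by positivity) (cfEval_nonneg w hθ.1))
  have hpos' : 0 < cfEval (v ++ b :: w) θ := by
    rw [cfEval_append]
    exact cfEval_pos v hpos
  rw [List.cons_append, cfEval]
  exact ⟨inv_pos.2 (by positivity), inv_lt_one_of_one_lt₀ (by linarith [one_le_pnatCast a])⟩

lemma IsCoded.exists_mem_Ioo (hx : IsCoded ω x) (hω : ∀ n, ω n ≠ []) (n : ℕ) :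
    ∃ y ∈ Ioo (0 : ℝ) 1, x = cfEval (prefixWord ω n) y := by
  obtain ⟨θ, hθ, rfl⟩ := hx (n + 2)
  refine ⟨_, cfEval_append_mem_Ioo (hω n) (hω (n + 1)) hθ, ?_⟩
  rw [← cfEval_append, ← List.append_assoc]
  rfl

lemma IsCoded.mem_Ioo (hx : IsCoded ω x) (hω : ∀ n, ω n ≠ []) : x ∈ Ioo (0 : ℝ) 1 := by
  obtain ⟨y, hy, rfl⟩ := hx.exists_mem_Ioo hω 0
  exact hy

lemma IsCoded.irrational (hx : IsCoded ω x) (hω : ∀ n, ω n ≠ []) : Irrational x :=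
  irrational_of_forall_exists_eq_cfEval fun n =>
    ⟨prefixWord ω n, le_length_prefixWord hω n, hx.exists_mem_Ioo hω n⟩

lemma IsCoded.pq_eq (hx : IsCoded ω x) (hω : ∀ n, ω n ≠ []) {i j : ℕ} (hj : j < (ω i).length) :
    pq x ((prefixWord ω i).length + j + 1) = (ω i)[j] := by
  obtain ⟨y, hy, rfl⟩ := hx.exists_mem_Ioo hω (i + 1)
  have hlt : (prefixWord ω i).length + j < (prefixWord ω (i + 1)).length := by
    simpa [prefixWord] using hj
  rw [pq_cfEval _ hy hlt]
  simp [prefixWord]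

lemma exists_eq_length_prefixWord_add (hω : ∀ n, ω n ≠ []) (n : ℕ) :
    ∃ i, ∃ j < (ω i).length, n = (prefixWord ω i).length + j := by
  induction n with
  | zero => exact ⟨0, 0, List.length_pos_of_ne_nil (hω 0), rfl⟩
  | succ n ih =>
    obtain ⟨i, j, hj, rfl⟩ := ih
    obtain hj' | hj' := (Nat.succ_le_of_lt hj).lt_or_eq
    · exact ⟨i, j + 1, hj', rfl⟩
    · refine ⟨i + 1, 0, List.length_pos_of_ne_nil (hω _), ?_⟩
      rw [prefixWord, List.length_append, ← hj']
      rfl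

end CodedPoints

section LowerBound

variable {B s x : ℝ} {𝓑 : Blocks B s} {c₀ : ℕ}
  {ω : ∀ i, ((Stage.seq 𝓑.length c₀ i).words 𝓑).words}

lemma Stage.length_prefixWord_eq_position (hB : 1 < B) (hs₀ : 0 ≤ s) (hs₁ : s ≤ 1)
    (ω : ∀ i, ((seq 𝓑.length c₀ i).words 𝓑).words) (i : ℕ) :
    (prefixWord (fun i => ω i) i).length = (seq 𝓑.length c₀ i).position := by
  induction i with
  | zero => rfl
  | succ i ih =>
    rw [prefixWord, List.length_append, ih, seq, position_next hB hs₀ hs₁ c₀ _ (ω i).2]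

namespace IsCoded

lemma pq_succ_le (hx : IsCoded (fun i => ω i) x) (hB : 1 < B) (hs₀ : 0 ≤ s) (hs₁ : s ≤ 1) (n : ℕ) :
    (pq x (n + 1) : ℝ) ≤ (𝓑.maxDigit + 8) * B ^ (max s (1 - s) * (n + 1)) := by
  have hω := WeightedWords.coe_ne_nil ω
  obtain ⟨i, j, hj, rfl⟩ := exists_eq_length_prefixWord_add hω n
  rw [hx.pq_eq hω hj]
  refine (Stage.coe_le_of_mem_words hB hs₀ hs₁ _ (ω i).2 (List.getElem_mem hj)).trans ?_
  rw [Stage.length_prefixWord_eq_position hB hs₀ hs₁]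
  gcongr
  · exact hB.le
  · simp

lemma eventually_pq_succ_lt (hx : IsCoded (fun i => ω i) x) (hB : 1 < B) (hs₀ : 0 < s)
    (hs₁ : s < 1) : ∀ᶠ n : ℕ in atTop, (pq x (n + 1) : ℝ) < B ^ n := by
  have hB₀ := one_pos.trans hB
  set τ := max s (1 - s)
  have hτ₁ : 0 < 1 - τ := sub_pos.2 (max_lt hs₁ (by linarith))
  have hlim : Tendsto (fun n : ℕ => B ^ ((1 - τ) * n)) atTop atTop :=
    (tendsto_rpow_atTop_of_base_gt_one B hB).comp
      (tendsto_natCast_atTop_atTop.const_mul_atTop hτ₁)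
  filter_upwards [hlim.eventually_gt_atTop ((𝓑.maxDigit + 8) * B ^ τ)] with n hn
  calc (pq x (n + 1) : ℝ) ≤ (𝓑.maxDigit + 8) * B ^ (τ * (n + 1)) :=
        hx.pq_succ_le hB hs₀.le hs₁.le n
    _ = (𝓑.maxDigit + 8) * B ^ τ * B ^ (τ * n) := by
      rw [mul_assoc, ← Real.rpow_add hB₀]
      ring_nf
    _ < B ^ ((1 - τ) * n) * B ^ (τ * n) := by gcongr
    _ = B ^ n := by
      rw [← Real.rpow_add hB₀, ← Real.rpow_natCast]
      ring_nf

lemma pow_le_pq_mul_pq (hx : IsCoded (fun i => ω i) x) (hB : 1 < B) (hs₀ : 0 ≤ s) (hs₁ : s ≤ 1)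
    {i N : ℕ} (hi : Stage.seq 𝓑.length c₀ i = .fst N) :
    B ^ (N + 1) ≤ (pq x (N + 1) : ℝ) * pq x (N + 1 + 1) := by
  have hω := WeightedWords.coe_ne_nil ω
  have hB₀ := one_pos.trans hB
  have hi' : Stage.seq 𝓑.length c₀ (i + 1) = .snd (N + 1) := by rw [Stage.seq, hi, Stage.next]
  have hmem {i : ℕ} {σ : Stage} (h : Stage.seq 𝓑.length c₀ i = σ) : ↑(ω i) ∈ (σ.words 𝓑).words :=
    h ▸ (ω i).2
  obtain ⟨a, ha, -, hωi⟩ := WeightedWords.exists_of_mem_largeDigits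
    (Stage.one_le_rpow_fst hB hs₀ N) (hmem hi)
  obtain ⟨b, hb, -, hωi'⟩ := WeightedWords.exists_of_mem_largeDigits
    (Stage.one_le_rpow_snd hB hs₁ (N + 1)) (hmem hi')
  have hpq : pq x (N + 1) = a := by
    have := hx.pq_eq hω (i := i) (j := 0) (by simp [hωi])
    simpa [Stage.length_prefixWord_eq_position hB hs₀ hs₁, hi, Stage.position, hωi] using this
  have hpq' : pq x (N + 1 + 1) = b := by
    have := hx.pq_eq hω (i := i + 1) (j := 0) (by simp [hωi'])
    simpa [Stage.length_prefixWord_eq_position hB hs₀ hs₁, hi', Stage.position, hωi'] using this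
  calc B ^ (N + 1) = B ^ (s * (N + 1)) * B ^ ((1 - s) * (N + 1 : ℕ)) := by
        rw [← Real.rpow_add hB₀, ← Real.rpow_natCast]
        push_cast
        ring_nf
    _ ≤ (pq x (N + 1) : ℝ) * pq x (N + 1 + 1) := by
      rw [hpq, hpq']
      gcongr

lemma infinite_setOf_pow_le (hx : IsCoded (fun i => ω i) x) (hB : 1 < B) (hs₀ : 0 ≤ s)
    (hs₁ : s ≤ 1) : {n : ℕ | B ^ n ≤ (pq x n : ℝ) * pq x (n + 1)}.Infinite := by
  refine infinite_of_not_bddAbove fun ⟨m, hm⟩ => ?_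
  obtain ⟨i, hmi, N, hi⟩ := Stage.exists_seq_eq_fst 𝓑.length c₀ m
  have hiN : i ≤ N := by
    have := le_length_prefixWord (WeightedWords.coe_ne_nil ω) i
    rwa [Stage.length_prefixWord_eq_position hB hs₀ hs₁, hi] at this
  have := hm (hx.pow_le_pq_mul_pq hB hs₀ hs₁ hi)
  omega

end IsCoded

theorem ofReal_le_dimH_of_blocks (hB : 1 < B) (hs₀ : 0 < s) (hs₁ : s < 1) (𝓑 : Blocks B s) :
    ENNReal.ofReal s ≤ dimH (largeProductSet B ∩
      {x | ∀ᶠ n : ℕ in atTop, (pq x (n + 1) : ℝ) < B ^ n}) := by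
  obtain ⟨c₀, hc₀⟩ : ∃ c₀ : ℕ, (16 ^ (2 * s)) ^ 2 * B ^ s ^ 2 ≤ B ^ (s ^ 2 * c₀) :=
    (((tendsto_rpow_atTop_of_base_gt_one B hB).comp
      (tendsto_natCast_atTop_atTop.const_mul_atTop (sq_pos_of_pos hs₀))).eventually_ge_atTop
        ((16 ^ (2 * s)) ^ 2 * B ^ s ^ 2)).exists
  set C := 16 ^ (2 * s) * B ^ (s ^ 2 * (c₀ + 1))
  set D := 2 * 50 ^ s * (16 ^ (2 * s) * B ^ s ^ 2) + C * 𝓑.spread with hD_def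
  have hC (i : ℕ) := Stage.potential_seq_le hB hs₀.le hs₁.le 𝓑.length c₀ i
  refine (Stage.isPotential_seq (𝓑 := 𝓑) hB hs₀.le hs₁.le hc₀).ofReal_le_dimH hs₀
    (C := max C D) (fun i => (hC i).trans (le_max_left _ _)) (fun i => ?_) fun ω x hx => ?_
  · obtain ⟨K, hK, hle⟩ := Stage.exists_isSpread_words (𝓑 := 𝓑) hB hs₀.le hs₁.le
      (Stage.seq 𝓑.length c₀ i)
    refine ⟨K, hK, (hle.trans ?_).trans (le_max_right _ _)⟩
    rw [hD_def]
    gcongr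
    exacts [𝓑.spread_nonneg, hC i]
  · have hω := WeightedWords.coe_ne_nil ω
    exact ⟨⟨hx.mem_Ioo hω, hx.irrational hω, hx.infinite_setOf_pow_le hB hs₀.le hs₁.le⟩,
      hx.eventually_pq_succ_lt hB hs₀ hs₁⟩

theorem ofReal_tExp_le_dimH (hB : 1 < B) :
    ENNReal.ofReal (tExp B) ≤ dimH (largeProductSet B ∩
      {x | ∀ᶠ n : ℕ in atTop, (pq x (n + 1) : ℝ) < B ^ n}) := by
  refine le_of_forall_lt fun d hd => ?_
  obtain ⟨s, hs₀, hds, hs⟩ := ENNReal.lt_iff_exists_real_btwn.1 hd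
  have hst := (ENNReal.ofReal_lt_ofReal_iff'.1 hs).1
  have hs_pos : 0 < s := ENNReal.ofReal_pos.1 (bot_le.trans_lt hds)
  obtain ⟨𝓑⟩ := nonempty_blocks hB hs₀ hst
  exact hds.trans_le (ofReal_le_dimH_of_blocks hB hs_pos (hst.trans_le (tExp_le_one hB)) 𝓑)

end LowerBound

theorem bakhtawar_bos_hussain (B : ℝ) (hB : 1 < B) :
    dimH {x : ℝ | x ∈ Set.Ioo (0 : ℝ) 1 ∧ Irrational x ∧
      {n : ℕ | B ^ n ≤ (pq x n : ℝ) * (pq x (n + 1) : ℝ)}.Infinite ∧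
      (∀ᶠ n : ℕ in Filter.atTop, (pq x (n + 1) : ℝ) < B ^ n)} =
    ENNReal.ofReal (tExp B) := by
  have hset : {x : ℝ | x ∈ Set.Ioo (0 : ℝ) 1 ∧ Irrational x ∧
      {n : ℕ | B ^ n ≤ (pq x n : ℝ) * (pq x (n + 1) : ℝ)}.Infinite ∧
      (∀ᶠ n : ℕ in Filter.atTop, (pq x (n + 1) : ℝ) < B ^ n)} =
      largeProductSet B ∩ {x | ∀ᶠ n : ℕ in atTop, (pq x (n + 1) : ℝ) < B ^ n} := by
    ext x
    simp only [largeProductSet, mem_inter_iff, mem_ofPred_eq, and_assoc]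
  rw [hset]
  exact le_antisymm ((dimH_mono inter_subset_left).trans (dimH_largeProductSet_le hB))
    (ofReal_tExp_le_dimH hB)
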